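/- arXiv:1803.01507 — 2 statements merged into one kernel-verified Lean document; each statement's English description precedes it below -/
import Mathlib

section
/- For any parameters α > 0, d > 0, β ≥ 1 and any initial data (θ₀, W₀) ∈ Ω_β, there exists a unique time-global solution (θ, W) ∈ C¹(ℝ) × C¹(ℝ) of the system dθ/dt = F₁(θ,W), dW/dt = F₂(θ,W) with θ(0) = θ₀, W(0) = W₀, and (θ(t), W(t)) ∈ Ω_β for all t ∈ ℝ. -/
noncomputable section

open Real Set

/-- θ_β = arctan(1/√β). -/
def thetaB (β : ℝ) : ℝ := Real.arctan (1 / Real.sqrt β)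

/-- The phase space Ω_β. -/
def OmegaB (β : ℝ) : Set (ℝ × ℝ) :=
  {p | 0 < p.1 ∧ p.1 < Real.pi / 2 ∧ p ≠ (thetaB β, 0)}

/-- D(θ,W) = (d²/β)(√β sin θ − cos θ)² + W². -/
def Dfun (d β θ W : ℝ) : ℝ :=
  d ^ 2 / β * (Real.sqrt β * Real.sin θ - Real.cos θ) ^ 2 + W ^ 2

/-- F₁(θ,W) = α √β W / D(θ,W)^{3/2}. -/
def F1 (α d β θ W : ℝ) : ℝ :=
  α * Real.sqrt β * W / Dfun d β θ W ^ ((3 : ℝ) / 2)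

/-- F₂(θ,W). -/
def F2 (α d β θ W : ℝ) : ℝ :=
  (β ^ ((3 : ℝ) / 2) * Real.sin θ - Real.cos θ) / (d * Real.sin θ * Real.cos θ) -
    α * d ^ 2 * (Real.sin θ + Real.sqrt β * Real.cos θ) *
        (Real.sqrt β * Real.sin θ - Real.cos θ) /
      (Real.sqrt β * Dfun d β θ W ^ ((3 : ℝ) / 2))

/-- The Hamiltonian H(θ,W). -/
def Ham (α d β θ W : ℝ) : ℝ :=
  1 / (2 * d) *
      Real.log (((1 - Real.sin θ) ^ (β ^ ((3 : ℝ) / 2)) * (1 - Real.cos θ)) /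
        ((1 + Real.sin θ) ^ (β ^ ((3 : ℝ) / 2)) * (1 + Real.cos θ))) -
    α * Real.sqrt β / Dfun d β θ W ^ ((1 : ℝ) / 2)


theorem lip_ball {E : Type*} [NormedAddCommGroup E] [NormedSpace ℝ E] [ProperSpace E]
    {v : E → E} (hv : ContDiff ℝ 1 v) (x : E) (r : ℝ) :
    ∃ K : NNReal, LipschitzOnWith K v (Metric.closedBall x r) :=
  LocallyLipschitzOn.exists_lipschitzOnWith_of_compact (isCompact_closedBall x r)
    (hv.locallyLipschitz.locallyLipschitzOn (s := Metric.closedBall x r))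

theorem uniq_Icc {E : Type*} [NormedAddCommGroup E] [NormedSpace ℝ E] [ProperSpace E]
    {v : E → E} (hv : ContDiff ℝ 1 v) {T : ℝ} (hT : 0 < T) {f g : ℝ → E}
    (hf : ContinuousOn f (Icc (-T) T)) (hf' : ∀ t ∈ Ioo (-T) T, HasDerivAt f (v (f t)) t)
    (hg : ContinuousOn g (Icc (-T) T)) (hg' : ∀ t ∈ Ioo (-T) T, HasDerivAt g (v (g t)) t)
    (h0 : f 0 = g 0) : EqOn f g (Icc (-T) T) := by
  have hb := ((isCompact_Icc.image_of_continuousOn hf).union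
    (isCompact_Icc.image_of_continuousOn hg)).isBounded
  obtain ⟨r, hr⟩ := hb.subset_closedBall 0
  obtain ⟨K, hK⟩ := lip_ball hv 0 r
  refine ODE_solution_unique_of_mem_Icc (v := fun _ => v) (s := fun _ => Metric.closedBall 0 r)
    (K := K) (t₀ := 0) (fun t _ => hK) ⟨by linarith, hT⟩ hf hf' ?_ hg hg' ?_ h0
  · intro t ht
    exact hr (Or.inl ⟨t, Ioo_subset_Icc_self ht, rfl⟩)
  · intro t ht
    exact hr (Or.inr ⟨t, Ioo_subset_Icc_self ht, rfl⟩)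

theorem global_exists {E : Type*} [NormedAddCommGroup E] [NormedSpace ℝ E] [ProperSpace E]
    [CompleteSpace E]
    {v : E → E} (hv : ContDiff ℝ 1 v) (M : ℝ) (hM : ∀ x, ‖v x‖ ≤ M) (x₀ : E) :
    ∃ f : ℝ → E, f 0 = x₀ ∧ ∀ t, HasDerivAt f (v (f t)) t := by
  have hM0 : 0 ≤ M := (norm_nonneg _).trans (hM x₀)
  have key : ∀ n : ℕ, ∃ f : ℝ → E, f 0 = x₀ ∧
      ∀ t ∈ Icc (-((n:ℝ)+1)) ((n:ℝ)+1),
        HasDerivWithinAt f (v (f t)) (Icc (-((n:ℝ)+1)) ((n:ℝ)+1)) t := by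
    intro n
    have hn : (0:ℝ) < (n:ℝ) + 1 := by positivity
    obtain ⟨K, hK⟩ := lip_ball hv x₀ (M * (n + 1))
    have hpl : IsPicardLindelof (fun _ => v) (tmin := -((n:ℝ)+1)) (tmax := (n:ℝ)+1)
        ⟨0, by constructor <;> linarith⟩ x₀ ⟨M * (n+1), by positivity⟩ 0 ⟨M, hM0⟩ K := by
      apply IsPicardLindelof.of_time_independent
      · intro x _
        exact hM x
      · exact hK
      · simp
        exact le_refl (M * (n+1))
    exact hpl.exists_eq_forall_mem_Icc_hasDerivWithinAt₀
  choose γ hγ0 hγ using key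
  have hcont : ∀ n : ℕ, ContinuousOn (γ n) (Icc (-((n:ℝ)+1)) ((n:ℝ)+1)) := fun n =>
    HasDerivWithinAt.continuousOn (hγ n)
  have hder : ∀ n : ℕ, ∀ t ∈ Ioo (-((n:ℝ)+1)) ((n:ℝ)+1), HasDerivAt (γ n) (v (γ n t)) t :=
    fun n t ht => (hγ n t (Ioo_subset_Icc_self ht)).hasDerivAt (Icc_mem_nhds ht.1 ht.2)
  have hag : ∀ m n : ℕ, m ≤ n → EqOn (γ m) (γ n) (Icc (-((m:ℝ)+1)) ((m:ℝ)+1)) := by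
    intro m n hmn
    have hmn' : (m:ℝ) ≤ n := by exact_mod_cast hmn
    refine uniq_Icc hv (by positivity) (hcont m) (hder m)
      ((hcont n).mono (Icc_subset_Icc (by linarith) (by linarith)))
      (fun t ht => hder n t ⟨by linarith [ht.1], by linarith [ht.2]⟩) (by rw [hγ0, hγ0])
  have habs : ∀ t : ℝ, |t| < (⌈|t|⌉₊ : ℝ) + 1 := fun t => by linarith [Nat.le_ceil |t|]
  refine ⟨fun t => γ ⌈|t|⌉₊ t, hγ0 _, fun t => ?_⟩
  set N := ⌈|t|⌉₊ with hN
  have hev : (fun s => γ ⌈|s|⌉₊ s) =ᶠ[nhds t] γ N := by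
    have : ∀ᶠ s in nhds t, |s| < (N:ℝ) + 1 := continuous_abs.continuousAt.eventually_lt_const (habs t)
    filter_upwards [this] with s hs
    rcases le_total ⌈|s|⌉₊ N with h | h
    · have := abs_lt.1 (habs s)
      exact hag _ _ h ⟨this.1.le, this.2.le⟩
    · have := abs_lt.1 hs
      exact (hag _ _ h ⟨this.1.le, this.2.le⟩).symm
  have h2 := hder N t (abs_lt.1 (habs t))
  exact h2.congr_of_eventuallyEq hev

/-- Abstract global existence and uniqueness with a coercive conserved quantity. -/
theorem abstract_global {E : Type*} [NormedAddCommGroup E] [NormedSpace ℝ E] [ProperSpace E]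
    [CompleteSpace E] {Ω : Set E} (hΩ : IsOpen Ω) {F : E → E} {H : E → ℝ}
    {H' : E → E →L[ℝ] ℝ}
    (hF : ∀ x ∈ Ω, ContDiffAt ℝ 1 F x) (hH : ∀ x ∈ Ω, ContDiffAt ℝ 1 H x)
    (hH' : ∀ x ∈ Ω, HasFDerivAt H (H' x) x) (hHF : ∀ x ∈ Ω, H' x (F x) = 0)
    (hcl : ∀ c, IsClosed (Ω ∩ {x | c ≤ H x}))
    (hbd : ∀ c, ∃ M, ∀ x ∈ Ω, c ≤ H x → ‖F x‖ ≤ M) (x₀ : E) (hx₀ : x₀ ∈ Ω) :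
    (∃ f : ℝ → E, f 0 = x₀ ∧ (∀ t, f t ∈ Ω) ∧ ∀ t, HasDerivAt f (F (f t)) t) ∧
    (∀ f g : ℝ → E, f 0 = x₀ → g 0 = x₀ → (∀ t, f t ∈ Ω) → (∀ t, g t ∈ Ω) →
      (∀ t, HasDerivAt f (F (f t)) t) → (∀ t, HasDerivAt g (F (g t)) t) → f = g) := by
  classical
  set c := H x₀ with hc
  let χ : E → ℝ := fun x => Real.smoothTransition (H x - c + 1)
  let g : E → ℝ := fun x => if x ∈ Ω then χ x else 0
  have hgO : ∀ x ∈ Ω, g x = χ x := fun x hx => if_pos hx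
  have hgOev : ∀ x ∈ Ω, g =ᶠ[nhds x] χ := fun x hx => by
    filter_upwards [hΩ.mem_nhds hx] with y hy using hgO y hy
  have hχ : ∀ x ∈ Ω, ContDiffAt ℝ 1 χ x := fun x hx =>
    (Real.smoothTransition.contDiffAt (n := 1)).comp x (((hH x hx).sub contDiffAt_const).add contDiffAt_const)
  have hg0 : ∀ x, x ∉ Ω ∩ {x | c - 1 ≤ H x} → g x = 0 := by
    intro x hx
    by_cases hxO : x ∈ Ω
    · rw [hgO x hxO]
      apply Real.smoothTransition.zero_of_nonpos
      have : ¬ (c - 1 ≤ H x) := fun h => hx ⟨hxO, h⟩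
      linarith
    · exact if_neg hxO
  have hg0ev : ∀ x, x ∉ Ω → g =ᶠ[nhds x] fun _ => 0 := by
    intro x hx
    filter_upwards [(hcl (c-1)).isOpen_compl.mem_nhds (fun h => hx h.1)] with y hy using hg0 y hy
  let v : E → E := fun x => g x • F x
  have hv : ContDiff ℝ 1 v := by
    rw [contDiff_iff_contDiffAt]
    intro x
    by_cases hx : x ∈ Ω
    · exact ((hχ x hx).congr_of_eventuallyEq (hgOev x hx)).smul (hF x hx)
    · refine (contDiffAt_const (c := (0:E))).congr_of_eventuallyEq ?_
      filter_upwards [hg0ev x hx] with y hy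
      simp [v, hy]
  obtain ⟨M, hM⟩ := hbd (c-1)
  have hM0 : 0 ≤ M := (norm_nonneg _).trans (hM x₀ hx₀ (by linarith))
  have hvM : ∀ x, ‖v x‖ ≤ M := by
    intro x
    by_cases hx : x ∈ Ω ∩ {x | c - 1 ≤ H x}
    · have h1 := hM x hx.1 hx.2
      have h2 : ‖g x‖ ≤ 1 := by
        rw [hgO x hx.1, Real.norm_eq_abs, abs_of_nonneg (Real.smoothTransition.nonneg _)]
        exact Real.smoothTransition.le_one _
      rw [norm_smul]
      nlinarith [norm_nonneg (g x), norm_nonneg (F x)]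
    · simp [v, hg0 x hx, hM0]
  have hg1 : ∀ x, g x = 1 → x ∈ Ω := by
    intro x hx
    by_contra h
    simp [g, h] at hx
  refine ⟨?_, ?_⟩
  · obtain ⟨f, hf0, hf⟩ := global_exists hv M hvM x₀
    have hd : ∀ t, HasDerivAt (fun s => g (f s)) 0 t := by
      intro t
      by_cases hx : f t ∈ Ω
      · have h1 : HasFDerivAt (fun x => H x - c + 1) (H' (f t)) (f t) :=
          ((hH' _ hx).sub_const c).add_const 1
        have h2 : HasDerivAt (fun s => H (f s) - c + 1) (H' (f t) (v (f t))) t :=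
          h1.comp_hasDerivAt t (hf t)
        have h3 : HasDerivAt Real.smoothTransition (deriv Real.smoothTransition (H (f t) - c + 1))
            (H (f t) - c + 1) :=
          ((Real.smoothTransition.contDiffAt (n := 1)).differentiableAt one_ne_zero).hasDerivAt
        have h4 := HasDerivAt.comp t h3 h2
        have h5 : H' (f t) (v (f t)) = 0 := by
          simp [v, hHF _ hx]
        rw [h5, mul_zero] at h4
        refine h4.congr_of_eventuallyEq ?_
        exact (hf t).continuousAt.eventually (hgOev _ hx)
      · refine (hasDerivAt_const t (0:ℝ)).congr_of_eventuallyEq ?_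
        exact (hf t).continuousAt.eventually (hg0ev _ hx)
    have hgc : ∀ t, g (f t) = 1 := by
      intro t
      have := is_const_of_deriv_eq_zero (f := fun s => g (f s)) (fun s => (hd s).differentiableAt)
        (fun s => (hd s).deriv) t 0
      simp only [hf0] at this
      rw [this, hgO x₀ hx₀]
      apply Real.smoothTransition.one_of_one_le
      linarith
    refine ⟨f, hf0, fun t => hg1 _ (hgc t), fun t => ?_⟩
    have := hf t
    simpa [v, hgc t] using this
  · have hsol : ∀ f : ℝ → E, f 0 = x₀ → (∀ t, f t ∈ Ω) → (∀ t, HasDerivAt f (F (f t)) t) →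
        ∀ t, HasDerivAt f (v (f t)) t := by
      intro f hf0 hfO hf t
      have hd : ∀ s, HasDerivAt (fun s => H (f s)) 0 s := by
        intro s
        have := (hH' _ (hfO s)).comp_hasDerivAt s (hf s)
        rwa [hHF _ (hfO s)] at this
      have := is_const_of_deriv_eq_zero (f := fun s => H (f s)) (fun s => (hd s).differentiableAt)
        (fun s => (hd s).deriv) t 0
      simp only [hf0] at this
      have h1 : g (f t) = 1 := by
        rw [hgO _ (hfO t)]
        apply Real.smoothTransition.one_of_one_le
        linarith
      simpa [v, h1] using hf t
    intro f k hf0 hk0 hfO hkO hf hk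
    funext t
    have h1 := hsol f hf0 hfO hf
    have h2 := hsol k hk0 hkO hk
    have hcf : Continuous f := continuous_iff_continuousAt.2 fun s => (hf s).continuousAt
    have hck : Continuous k := continuous_iff_continuousAt.2 fun s => (hk s).continuousAt
    refine uniq_Icc hv (T := |t| + 1) (by positivity) hcf.continuousOn (fun s _ => h1 s)
      hck.continuousOn (fun s _ => h2 s) (by rw [hf0, hk0]) ?_
    have := abs_lt.1 (lt_add_one |t|)
    exact ⟨this.1.le, this.2.le⟩

theorem thetaB_cond {β : ℝ} (hβ : 1 ≤ β) {θ : ℝ} (h0 : 0 < θ) (h1 : θ < Real.pi / 2) :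
    Real.sqrt β * Real.sin θ - Real.cos θ = 0 ↔ θ = thetaB β := by
  have hs : 0 < Real.sqrt β := Real.sqrt_pos.2 (by linarith)
  have hc : 0 < Real.cos θ := Real.cos_pos_of_mem_Ioo ⟨by linarith, h1⟩
  have ht : Real.sqrt β * Real.sin θ - Real.cos θ = 0 ↔ Real.tan θ = 1 / Real.sqrt β := by
    rw [Real.tan_eq_sin_div_cos, div_eq_div_iff hc.ne' hs.ne']
    constructor <;> intro h <;> linarith
  rw [ht, thetaB]
  constructor
  · intro h
    rw [← h, Real.arctan_tan (by linarith) h1]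
  · intro h
    rw [h, Real.tan_arctan]

theorem D_pos_iff {d β : ℝ} (hd : 0 < d) (hβ : 1 ≤ β) {p : ℝ × ℝ} (h0 : 0 < p.1)
    (h1 : p.1 < Real.pi / 2) : 0 < Dfun d β p.1 p.2 ↔ p ≠ (thetaB β, 0) := by
  have hq : 0 < d ^ 2 / β := by positivity
  have key : Dfun d β p.1 p.2 = 0 ↔ p = (thetaB β, 0) := by
    rw [Dfun, Prod.ext_iff, ← thetaB_cond hβ h0 h1,
      add_eq_zero_iff_of_nonneg (by positivity) (by positivity)]
    simp [hq.ne']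
  have hnn : 0 ≤ Dfun d β p.1 p.2 := by unfold Dfun; positivity
  rw [← not_iff_not, not_lt, not_not, ← key]
  exact ⟨fun h => le_antisymm h hnn, fun h => h.le⟩

theorem OmegaB_iff {d β : ℝ} (hd : 0 < d) (hβ : 1 ≤ β) (p : ℝ × ℝ) :
    p ∈ OmegaB β ↔ 0 < p.1 ∧ p.1 < Real.pi / 2 ∧ 0 < Dfun d β p.1 p.2 := by
  constructor
  · rintro ⟨h0, h1, h2⟩
    exact ⟨h0, h1, (D_pos_iff hd hβ h0 h1).2 h2⟩
  · rintro ⟨h0, h1, h2⟩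
    exact ⟨h0, h1, (D_pos_iff hd hβ h0 h1).1 h2⟩

theorem D_contDiff (d β : ℝ) : ContDiff ℝ 1 (fun p : ℝ × ℝ => Dfun d β p.1 p.2) := by
  unfold Dfun
  fun_prop

theorem OmegaB_open {β : ℝ} (hβ : 1 ≤ β) : IsOpen (OmegaB β) := by
  have : OmegaB β = {p | 0 < p.1} ∩ ({p | p.1 < Real.pi / 2} ∩ {p | 0 < Dfun 1 β p.1 p.2}) := by
    ext p
    exact OmegaB_iff one_pos hβ p
  rw [this]
  exact (isOpen_lt continuous_const continuous_fst).inter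
    ((isOpen_lt continuous_fst continuous_const).inter
      (isOpen_lt continuous_const (D_contDiff 1 β).continuous))

theorem F_contDiffAt {α d β : ℝ} (hd : 0 < d) (hβ : 1 ≤ β) {p : ℝ × ℝ}
    (hp : p ∈ OmegaB β) :
    ContDiffAt ℝ 1 (fun p : ℝ × ℝ => (F1 α d β p.1 p.2, F2 α d β p.1 p.2)) p := by
  obtain ⟨h0, h1, hD⟩ := (OmegaB_iff hd hβ p).1 hp
  have hs : 0 < Real.sin p.1 := Real.sin_pos_of_pos_of_lt_pi h0 (by linarith)
  have hc : 0 < Real.cos p.1 := Real.cos_pos_of_mem_Ioo ⟨by linarith, h1⟩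
  have hsb : 0 < Real.sqrt β := Real.sqrt_pos.2 (by linarith)
  have hDp : ContDiffAt ℝ 1 (fun p : ℝ × ℝ => Dfun d β p.1 p.2 ^ ((3 : ℝ) / 2)) p :=
    (D_contDiff d β).contDiffAt.rpow_const_of_ne hD.ne'
  have hDne : Dfun d β p.1 p.2 ^ ((3 : ℝ) / 2) ≠ 0 := (Real.rpow_pos_of_pos hD _).ne'
  refine ContDiffAt.prodMk ?_ ?_
  · unfold F1
    exact ContDiffAt.div (by fun_prop) hDp hDne
  · unfold F2
    refine ContDiffAt.sub (ContDiffAt.div (by fun_prop) (by fun_prop) (by positivity)) ?_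
    exact ContDiffAt.div (by fun_prop) (contDiffAt_const.mul hDp) (mul_ne_zero hsb.ne' hDne)

/-- The Hamiltonian, with the logarithm expanded. -/
def HamL (α d β : ℝ) (p : ℝ × ℝ) : ℝ :=
  1 / (2 * d) * (β ^ ((3 : ℝ) / 2) * (Real.log (1 - Real.sin p.1) - Real.log (1 + Real.sin p.1)) +
    (Real.log (1 - Real.cos p.1) - Real.log (1 + Real.cos p.1))) -
    α * Real.sqrt β * Dfun d β p.1 p.2 ^ (-(1 : ℝ) / 2)

theorem trig_lt {θ : ℝ} (h0 : 0 < θ) (h1 : θ < Real.pi / 2) :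
    0 < Real.sin θ ∧ Real.sin θ < 1 ∧ 0 < Real.cos θ ∧ Real.cos θ < 1 := by
  have hs : 0 < Real.sin θ := Real.sin_pos_of_pos_of_lt_pi h0 (by linarith)
  have hc : 0 < Real.cos θ := Real.cos_pos_of_mem_Ioo ⟨by linarith, h1⟩
  have := Real.sin_sq_add_cos_sq θ
  refine ⟨hs, by nlinarith, hc, by nlinarith⟩

theorem HamL_contDiffAt {α d β : ℝ} (hd : 0 < d) (hβ : 1 ≤ β) {p : ℝ × ℝ}
    (hp : p ∈ OmegaB β) : ContDiffAt ℝ 1 (HamL α d β) p := by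
  obtain ⟨h0, h1, hD⟩ := (OmegaB_iff hd hβ p).1 hp
  obtain ⟨hs, hs1, hc, hc1⟩ := trig_lt h0 h1
  have hDp : ContDiffAt ℝ 1 (fun p : ℝ × ℝ => Dfun d β p.1 p.2 ^ (-(1 : ℝ) / 2)) p :=
    (D_contDiff d β).contDiffAt.rpow_const_of_ne hD.ne'
  have e1 : ContDiffAt ℝ 1 (fun p : ℝ × ℝ => Real.log (1 - Real.sin p.1)) p :=
    ContDiffAt.log (by fun_prop) (by linarith)
  have e2 : ContDiffAt ℝ 1 (fun p : ℝ × ℝ => Real.log (1 + Real.sin p.1)) p :=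
    ContDiffAt.log (by fun_prop) (by linarith)
  have e3 : ContDiffAt ℝ 1 (fun p : ℝ × ℝ => Real.log (1 - Real.cos p.1)) p :=
    ContDiffAt.log (by fun_prop) (by linarith)
  have e4 : ContDiffAt ℝ 1 (fun p : ℝ × ℝ => Real.log (1 + Real.cos p.1)) p :=
    ContDiffAt.log (by fun_prop) (by linarith)
  unfold HamL
  exact (contDiffAt_const.mul ((contDiffAt_const.mul (e1.sub e2)).add (e3.sub e4))).sub
    (contDiffAt_const.mul hDp)

theorem HamL_hasFDerivAt {α d β : ℝ} (hd : 0 < d) (hβ : 1 ≤ β) {p : ℝ × ℝ}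
    (hp : p ∈ OmegaB β) : HasFDerivAt (HamL α d β)
      ((-F2 α d β p.1 p.2) • ContinuousLinearMap.fst ℝ ℝ ℝ +
        F1 α d β p.1 p.2 • ContinuousLinearMap.snd ℝ ℝ ℝ) p := by
  obtain ⟨h0, h1, hD⟩ := (OmegaB_iff hd hβ p).1 hp
  obtain ⟨hs, hs1, hc, hc1⟩ := trig_lt h0 h1
  have hsb : 0 < Real.sqrt β := Real.sqrt_pos.2 (by linarith)
  have hsq : Real.sqrt β ^ 2 = β := Real.sq_sqrt (by linarith)
  have hss := Real.sin_sq_add_cos_sq p.1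
  have g1 : HasDerivAt (fun θ : ℝ => 1 / (2 * d) * (β ^ ((3 : ℝ) / 2) *
      (Real.log (1 - Real.sin θ) - Real.log (1 + Real.sin θ)) +
      (Real.log (1 - Real.cos θ) - Real.log (1 + Real.cos θ))))
      (-((β ^ ((3 : ℝ) / 2) * Real.sin p.1 - Real.cos p.1) / (d * Real.sin p.1 * Real.cos p.1)))
      p.1 := by
    have e1 := ((Real.hasDerivAt_sin p.1).const_sub 1).log (by linarith)
    have e2 := ((Real.hasDerivAt_sin p.1).const_add 1).log (by linarith)
    have e3 := ((Real.hasDerivAt_cos p.1).const_sub 1).log (by linarith)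
    have e4 := ((Real.hasDerivAt_cos p.1).const_add 1).log (by linarith)
    have e := (((e1.sub e2).const_mul (β ^ ((3 : ℝ) / 2))).add (e3.sub e4)).const_mul (1 / (2 * d))
    refine e.congr_deriv ?_
    generalize β ^ ((3 : ℝ) / 2) = b
    have a1 : -Real.cos p.1 / (1 - Real.sin p.1) - Real.cos p.1 / (1 + Real.sin p.1) =
        -2 / Real.cos p.1 := by
      have i1 : 1 - Real.sin p.1 ≠ 0 := by linarith
      have i2 : 1 + Real.sin p.1 ≠ 0 := by linarith
      field_simp
      linear_combination (-2) * hss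
    have a2 : -(-Real.sin p.1) / (1 - Real.cos p.1) - -Real.sin p.1 / (1 + Real.cos p.1) =
        2 / Real.sin p.1 := by
      have i1 : 1 - Real.cos p.1 ≠ 0 := by linarith
      have i2 : 1 + Real.cos p.1 ≠ 0 := by linarith
      field_simp
      linear_combination 2 * hss
    rw [a1, a2]
    field_simp
    ring
  have hf : HasFDerivAt (fun q : ℝ × ℝ => q.1) (ContinuousLinearMap.fst ℝ ℝ ℝ) p := hasFDerivAt_fst
  have hw : HasFDerivAt (fun q : ℝ × ℝ => q.2) (ContinuousLinearMap.snd ℝ ℝ ℝ) p := hasFDerivAt_snd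
  have g2 := g1.comp_hasFDerivAt p hf
  have s1 : HasDerivAt (fun θ : ℝ => d ^ 2 / β * (Real.sqrt β * Real.sin θ - Real.cos θ) ^ 2)
      (2 * (d ^ 2 / β) * (Real.sqrt β * Real.sin p.1 - Real.cos p.1) *
        (Real.sin p.1 + Real.sqrt β * Real.cos p.1)) p.1 := by
    have := ((((Real.hasDerivAt_sin p.1).const_mul (Real.sqrt β)).sub
      (Real.hasDerivAt_cos p.1)).pow 2).const_mul (d ^ 2 / β)
    refine this.congr_deriv ?_
    simp
    ring
  have s2 : HasDerivAt (fun W : ℝ => W ^ 2) (2 * p.2) p.2 := by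
    simpa using hasDerivAt_pow 2 p.2
  have hDd : HasFDerivAt (fun q : ℝ × ℝ => Dfun d β q.1 q.2) _ p :=
    (s1.comp_hasFDerivAt p hf).add (s2.comp_hasFDerivAt p hw)
  have hr : HasDerivAt (fun x : ℝ => x ^ (-(1 : ℝ) / 2))
      (-(1 : ℝ) / 2 * Dfun d β p.1 p.2 ^ (-(1 : ℝ) / 2 - 1)) (Dfun d β p.1 p.2) :=
    Real.hasDerivAt_rpow_const (Or.inl hD.ne')
  have hR := (hr.comp_hasFDerivAt p hDd).const_mul (α * Real.sqrt β)
  have hfin := g2.sub hR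
  refine hfin.congr_fderiv ?_
  have hpow : Dfun d β p.1 p.2 ^ (-(1 : ℝ) / 2 - 1) = (Dfun d β p.1 p.2 ^ ((3 : ℝ) / 2))⁻¹ := by
    rw [← Real.rpow_neg hD.le]
    norm_num
  rw [hpow]
  have hpos : Dfun d β p.1 p.2 ^ ((3 : ℝ) / 2) ≠ 0 := (Real.rpow_pos_of_pos hD _).ne'
  unfold F1 F2
  generalize Dfun d β p.1 p.2 ^ ((3 : ℝ) / 2) = P at hpos ⊢
  have hβ0 : β ≠ 0 := by linarith
  have hq : d ^ 2 / β = d ^ 2 / Real.sqrt β ^ 2 := by rw [hsq]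
  rw [hq]
  generalize β ^ ((3 : ℝ) / 2) = b
  ext
  · simp
    field_simp
    ring
  · simp
    field_simp

theorem HamL_bounds {α d β : ℝ} (hα : 0 < α) (hd : 0 < d) (hβ : 1 ≤ β) (c : ℝ) :
    ∃ e > 0, ∀ p ∈ OmegaB β, c ≤ HamL α d β p →
      e ≤ 1 - Real.sin p.1 ∧ e ≤ 1 - Real.cos p.1 ∧ e ≤ Dfun d β p.1 p.2 := by
  have hsb : 0 < Real.sqrt β := Real.sqrt_pos.2 (by linarith)
  set b := β ^ ((3 : ℝ) / 2) with hb
  have hb0 : 0 < b := Real.rpow_pos_of_pos (by linarith) _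
  have hk : 0 < 1 / (2 * d) := by positivity
  have hA : 0 < α * Real.sqrt β := by positivity
  set e3 := (α * Real.sqrt β / (|c| + 1)) ^ (2 : ℕ) with he3
  refine ⟨min (Real.exp (2 * d * c / b)) (min (Real.exp (2 * d * c)) e3), ?_, ?_⟩
  · refine lt_min (Real.exp_pos _) (lt_min (Real.exp_pos _) (by positivity))
  intro p hp hcp
  obtain ⟨h0, h1, hD⟩ := (OmegaB_iff hd hβ p).1 hp
  obtain ⟨hs, hs1, hc, hc1⟩ := trig_lt h0 h1
  have l1 : Real.log (1 - Real.sin p.1) ≤ 0 := Real.log_nonpos (by linarith) (by linarith)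
  have l2 : 0 ≤ Real.log (1 + Real.sin p.1) := Real.log_nonneg (by linarith)
  have l3 : Real.log (1 - Real.cos p.1) ≤ 0 := Real.log_nonpos (by linarith) (by linarith)
  have l4 : 0 ≤ Real.log (1 + Real.cos p.1) := Real.log_nonneg (by linarith)
  have l5 : 0 < Dfun d β p.1 p.2 ^ (-(1 : ℝ) / 2) := Real.rpow_pos_of_pos hD _
  have hx1 := mul_nonneg hb0.le l2
  have hx2 := mul_nonpos_of_nonneg_of_nonpos hb0.le l1
  have hx3 := mul_pos hA l5
  unfold HamL at hcp
  rw [← hb] at hcp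
  have hsum : 2 * d * c ≤ b * (Real.log (1 - Real.sin p.1) - Real.log (1 + Real.sin p.1)) +
      (Real.log (1 - Real.cos p.1) - Real.log (1 + Real.cos p.1)) := by
    have : c ≤ 1 / (2 * d) * (b * (Real.log (1 - Real.sin p.1) - Real.log (1 + Real.sin p.1)) +
      (Real.log (1 - Real.cos p.1) - Real.log (1 + Real.cos p.1))) := by linarith
    rw [one_div, inv_mul_eq_div, le_div_iff₀ (by positivity)] at this
    linarith
  refine ⟨(min_le_left _ _).trans ?_, (min_le_right _ _).trans ((min_le_left _ _).trans ?_),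
    (min_le_right _ _).trans ((min_le_right _ _).trans ?_)⟩
  · rw [← Real.le_log_iff_exp_le (by linarith), div_le_iff₀ hb0]
    linarith
  · rw [← Real.le_log_iff_exp_le (by linarith)]
    linarith
  · have hneg : 1 / (2 * d) * (b * (Real.log (1 - Real.sin p.1) - Real.log (1 + Real.sin p.1)) +
      (Real.log (1 - Real.cos p.1) - Real.log (1 + Real.cos p.1))) ≤ 0 :=
      mul_nonpos_of_nonneg_of_nonpos hk.le (by linarith)
    have h6 : α * Real.sqrt β * Dfun d β p.1 p.2 ^ (-(1 : ℝ) / 2) ≤ |c| + 1 := by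
      linarith [neg_abs_le c]
    have h7 : Dfun d β p.1 p.2 ^ (-(1 : ℝ) / 2) = (Real.sqrt (Dfun d β p.1 p.2))⁻¹ := by
      rw [Real.sqrt_eq_rpow, ← Real.rpow_neg hD.le]
      norm_num
    have hsD : 0 < Real.sqrt (Dfun d β p.1 p.2) := Real.sqrt_pos.2 hD
    rw [h7, ← div_eq_mul_inv, div_le_iff₀ hsD] at h6
    have h8 : α * Real.sqrt β / (|c| + 1) ≤ Real.sqrt (Dfun d β p.1 p.2) := by
      rw [div_le_iff₀ (by positivity)]
      linarith
    have h9 := pow_le_pow_left₀ (by positivity) h8 2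
    rwa [Real.sq_sqrt hD.le] at h9

theorem HamL_closed {α d β : ℝ} (hα : 0 < α) (hd : 0 < d) (hβ : 1 ≤ β) (c : ℝ) :
    IsClosed (OmegaB β ∩ {p | c ≤ HamL α d β p}) := by
  obtain ⟨e, he, hb⟩ := HamL_bounds hα hd hβ c
  let K : Set (ℝ × ℝ) := {p | 0 ≤ p.1} ∩ ({p | p.1 ≤ Real.pi / 2} ∩ ({p | e ≤ 1 - Real.sin p.1} ∩
    ({p | e ≤ 1 - Real.cos p.1} ∩ {p | e ≤ Dfun d β p.1 p.2})))
  have hK : IsClosed K := by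
    refine (isClosed_le continuous_const continuous_fst).inter
      ((isClosed_le continuous_fst continuous_const).inter
      ((isClosed_le continuous_const (by fun_prop)).inter
      ((isClosed_le continuous_const (by fun_prop)).inter
      (isClosed_le continuous_const (D_contDiff d β).continuous))))
  have hKO : K ⊆ OmegaB β := by
    rintro p ⟨k1, k2, k3, k4, k5⟩
    simp only [mem_setOf_eq] at k1 k2 k3 k4 k5
    refine (OmegaB_iff hd hβ p).2 ⟨lt_of_le_of_ne k1 ?_, lt_of_le_of_ne k2 ?_, by linarith⟩
    · intro h
      rw [← h, Real.cos_zero] at k4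
      linarith
    · intro h
      rw [h, Real.sin_pi_div_two] at k3
      linarith
  have heq : OmegaB β ∩ {p | c ≤ HamL α d β p} = K ∩ (HamL α d β) ⁻¹' (Ici c) := by
    ext p
    constructor
    · rintro ⟨h1, h2⟩
      obtain ⟨b1, b2, b3⟩ := hb p h1 h2
      exact ⟨⟨h1.1.le, h1.2.1.le, b1, b2, b3⟩, h2⟩
    · rintro ⟨h1, h2⟩
      exact ⟨hKO h1, h2⟩
  rw [heq]
  refine ContinuousOn.preimage_isClosed_of_isClosed ?_ hK isClosed_Ici
  intro p hp
  exact (HamL_contDiffAt hd hβ (hKO hp)).continuousAt.continuousWithinAt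

theorem F_bounded {α d β : ℝ} (hα : 0 < α) (hd : 0 < d) (hβ : 1 ≤ β) (c : ℝ) :
    ∃ M, ∀ p ∈ OmegaB β, c ≤ HamL α d β p →
      ‖((F1 α d β p.1 p.2, F2 α d β p.1 p.2) : ℝ × ℝ)‖ ≤ M := by
  obtain ⟨e, he, hb⟩ := HamL_bounds hα hd hβ c
  have hsb : 0 < Real.sqrt β := Real.sqrt_pos.2 (by linarith)
  have hbp : 0 < β ^ ((3 : ℝ) / 2) := Real.rpow_pos_of_pos (by linarith) _
  have heP : 0 < e ^ ((3 : ℝ) / 2) := Real.rpow_pos_of_pos he _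
  refine ⟨max (α * Real.sqrt β / e)
    ((β ^ ((3 : ℝ) / 2) + 1) / (d * e * e) +
      α * d ^ 2 * (1 + Real.sqrt β) * (Real.sqrt β + 1) / (Real.sqrt β * e ^ ((3 : ℝ) / 2))), ?_⟩
  intro p hp hcp
  obtain ⟨h0, h1, hD⟩ := (OmegaB_iff hd hβ p).1 hp
  obtain ⟨hs, hs1, hc, hc1⟩ := trig_lt h0 h1
  obtain ⟨b1, b2, b3⟩ := hb p hp hcp
  have hss := Real.sin_sq_add_cos_sq p.1
  have hse : e ≤ Real.sin p.1 := by nlinarith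
  have hce : e ≤ Real.cos p.1 := by nlinarith
  have hPp : 0 < Dfun d β p.1 p.2 ^ ((3 : ℝ) / 2) := Real.rpow_pos_of_pos hD _
  rw [Prod.norm_def]
  refine max_le_max ?_ ?_
  · have hW : |p.2| ≤ Real.sqrt (Dfun d β p.1 p.2) := by
      apply Real.abs_le_sqrt
      unfold Dfun
      have : 0 ≤ d ^ 2 / β * (Real.sqrt β * Real.sin p.1 - Real.cos p.1) ^ 2 := by positivity
      linarith
    have hP : Dfun d β p.1 p.2 ^ ((3 : ℝ) / 2) =
        Dfun d β p.1 p.2 * Real.sqrt (Dfun d β p.1 p.2) := by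
      rw [Real.sqrt_eq_rpow, show (3 : ℝ) / 2 = 1 + 1 / 2 by norm_num, Real.rpow_add hD,
        Real.rpow_one]
    have hsD : 0 < Real.sqrt (Dfun d β p.1 p.2) := Real.sqrt_pos.2 hD
    simp only [F1, Real.norm_eq_abs]
    rw [abs_div, abs_mul, abs_of_pos hPp, abs_of_pos (mul_pos hα hsb), hP]
    calc α * Real.sqrt β * |p.2| / (Dfun d β p.1 p.2 * Real.sqrt (Dfun d β p.1 p.2))
        ≤ α * Real.sqrt β * Real.sqrt (Dfun d β p.1 p.2) /
          (Dfun d β p.1 p.2 * Real.sqrt (Dfun d β p.1 p.2)) := by gcongr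
      _ = α * Real.sqrt β / Dfun d β p.1 p.2 := by field_simp
      _ ≤ α * Real.sqrt β / e := by gcongr
  · simp only [F2, Real.norm_eq_abs]
    refine (abs_sub _ _).trans (add_le_add ?_ ?_)
    · rw [abs_div, abs_of_pos (by positivity : 0 < d * Real.sin p.1 * Real.cos p.1)]
      have : |β ^ ((3 : ℝ) / 2) * Real.sin p.1 - Real.cos p.1| ≤ β ^ ((3 : ℝ) / 2) + 1 := by
        rw [abs_le]
        constructor <;> nlinarith
      gcongr
    · rw [abs_div, abs_mul, abs_of_pos (mul_pos hsb hPp),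
        abs_of_pos (by positivity : 0 < α * d ^ 2 * (Real.sin p.1 + Real.sqrt β * Real.cos p.1))]
      have i1 : |Real.sqrt β * Real.sin p.1 - Real.cos p.1| ≤ Real.sqrt β + 1 := by
        rw [abs_le]
        constructor <;> nlinarith
      have i2 : Real.sin p.1 + Real.sqrt β * Real.cos p.1 ≤ 1 + Real.sqrt β := by nlinarith
      gcongr

/-- Theorem 3.1: for any α, d > 0, β ≥ 1 and (θ₀, W₀) ∈ Ω_β there is a unique
time-global C¹ solution of θ' = F₁(θ,W), W' = F₂(θ,W) staying in Ω_β. -/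
theorem global_existence_uniqueness_same_sign
    (α d β : ℝ) (hα : 0 < α) (hd : 0 < d) (hβ : 1 ≤ β)
    (θ₀ W₀ : ℝ) (h₀ : (θ₀, W₀) ∈ OmegaB β) :
    ∃! p : (ℝ → ℝ) × (ℝ → ℝ),
      ContDiff ℝ 1 p.1 ∧ ContDiff ℝ 1 p.2 ∧
      p.1 0 = θ₀ ∧ p.2 0 = W₀ ∧
      (∀ t : ℝ, (p.1 t, p.2 t) ∈ OmegaB β) ∧
      (∀ t : ℝ, HasDerivAt p.1 (F1 α d β (p.1 t) (p.2 t)) t) ∧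
      (∀ t : ℝ, HasDerivAt p.2 (F2 α d β (p.1 t) (p.2 t)) t) := by
  obtain ⟨⟨f, hf0, hfO, hf⟩, huniq⟩ := abstract_global (OmegaB_open hβ)
    (F := fun p : ℝ × ℝ => (F1 α d β p.1 p.2, F2 α d β p.1 p.2)) (H := HamL α d β)
    (fun p hp => F_contDiffAt hd hβ hp) (fun p hp => HamL_contDiffAt hd hβ hp)
    (fun p hp => HamL_hasFDerivAt hd hβ hp) (fun p hp => by simp; ring)
    (HamL_closed hα hd hβ) (F_bounded hα hd hβ) (θ₀, W₀) h₀
  have hFc : Continuous (fun t => ((F1 α d β (f t).1 (f t).2, F2 α d β (f t).1 (f t).2) : ℝ × ℝ)) := by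
    rw [continuous_iff_continuousAt]
    intro t
    exact ContinuousAt.comp (f := f)
      (g := fun p : ℝ × ℝ => ((F1 α d β p.1 p.2, F2 α d β p.1 p.2) : ℝ × ℝ))
      (F_contDiffAt hd hβ (hfO t)).continuousAt (hf t).continuousAt
  have hfC : ContDiff ℝ 1 f := by
    rw [contDiff_one_iff_deriv]
    refine ⟨fun t => (hf t).differentiableAt, ?_⟩
    have : deriv f = _ := funext fun t => (hf t).deriv
    rw [this]
    exact hFc
  refine ⟨(fun t => (f t).1, fun t => (f t).2), ⟨hfC.fst, hfC.snd, by simp [hf0], by simp [hf0],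
    hfO, fun t => ?_, fun t => ?_⟩, ?_⟩
  · exact (hasFDerivAt_fst (𝕜 := ℝ) (p := f t)).comp_hasDerivAt t (hf t)
  · exact (hasFDerivAt_snd (𝕜 := ℝ) (p := f t)).comp_hasDerivAt t (hf t)
  · rintro ⟨θ, W⟩ ⟨-, -, hθ0, hW0, hO, hθ, hW⟩
    have := huniq (fun t => (θ t, W t)) f (by simp only [] at hθ0 hW0; rw [hθ0, hW0]) hf0 hO hfO
      (fun t => (hθ t).prodMk (hW t)) hf
    rw [← this]
end
end

section
/- Let β ≥ 1, 0 < α < 1/3, and let (θ_*, 0) and (θ_**, 0) with 0 < θ_* < θ_β < θ_** < π/2 be the two equilibrium points of the system dθ/dt = F₁(θ,W), dW/dt = F₂(θ,W). For initial data of the form (θ₀, 0) ∈ Ω_β: if θ₀ ∈ (θ_*, θ_**) and H(θ₀, 0) < min{H(θ_*, 0), H(θ_**, 0)}, then the solution starting from (θ₀, 0) is a leapfrogging solution (a closed orbit revolving around (θ_β, 0)), and its orbit equals the set {(θ,W) ∈ Ω_β : H(θ,W) = H(θ₀,0)} ∩ ([θ_*, θ_**] × ℝ); otherwise, the solution starting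 from (θ₀, 0) is not a leapfrogging solution. -/
noncomputable section

open Real Set

/-- A time-global solution of the system (3.4), staying in the phase space Ω_β. -/
def IsSolution (α d β : ℝ) (θ W : ℝ → ℝ) : Prop :=
  (∀ t : ℝ, (θ t, W t) ∈ OmegaB β) ∧
  (∀ t : ℝ, HasDerivAt θ (F1 α d β (θ t) (W t)) t) ∧
  (∀ t : ℝ, HasDerivAt W (F2 α d β (θ t) (W t)) t)

/-- A leapfrogging solution: a non-constant periodic solution whose (closed）orbit
revolves around the point (θ_β, 0); in particular it meets both line segments
(0, θ_β) × {0} and (θ_β, π/2) × {0}. -/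
def IsLeapfrog (β : ℝ) (θ W : ℝ → ℝ) : Prop :=
  (∃ T : ℝ, 0 < T ∧ ∀ t : ℝ, θ (t + T) = θ t ∧ W (t + T) = W t) ∧
  (∃ t s : ℝ, (θ t, W t) ≠ (θ s, W s)) ∧
  (∃ t₁ : ℝ, θ t₁ ∈ Set.Ioo 0 (thetaB β) ∧ W t₁ = 0) ∧
  (∃ t₂ : ℝ, θ t₂ ∈ Set.Ioo (thetaB β) (Real.pi / 2) ∧ W t₂ = 0)

/-! ### General lemmas -/

/-- Strict monotonicity up to the first critical point when the function tends to `-∞`. -/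
lemma strictMonoOn_aux {h h' : ℝ → ℝ} {a c : ℝ}
    (hder : ∀ x ∈ Ioc a c, HasDerivAt h (h' x) x)
    (hne : ∀ x ∈ Ioo a c, h' x ≠ 0)
    (hbot : Filter.Tendsto h (nhdsWithin a (Ioi a)) Filter.atBot) :
    StrictMonoOn h (Ioc a c) := by
  intro x hx y hy hxy
  by_contra hcon
  push Not at hcon
  have h1 : ∀ᶠ z in nhdsWithin a (Ioi a), h z < h y := hbot.eventually_lt_atBot _
  have h2 : ∀ᶠ z in nhdsWithin a (Ioi a), z ∈ Ioo a x := Ioo_mem_nhdsGT hx.1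
  obtain ⟨z, hz1, hz2⟩ := (h1.and h2).exists
  have hc : ContinuousOn h (Ioc a c) := fun u hu => (hder u hu).continuousAt.continuousWithinAt
  have hsub : Icc z x ⊆ Ioc a c := fun u hu => ⟨hz2.1.trans_le hu.1, hu.2.trans hx.2⟩
  obtain ⟨w, hw, hwe⟩ := intermediate_value_Icc hz2.2.le (hc.mono hsub) ⟨hz1.le, hcon⟩
  have hwy : w < y := hw.2.trans_lt hxy
  have haw : a < w := hz2.1.trans_le hw.1
  have hsub2 : Icc w y ⊆ Ioc a c := fun u hu => ⟨haw.trans_le hu.1, hu.2.trans hy.2⟩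
  obtain ⟨u, hu, hu0⟩ := exists_hasDerivAt_eq_zero hwy (hc.mono hsub2) hwe
    (fun v hv => hder v (hsub2 ⟨hv.1.le, hv.2.le⟩))
  exact hne u ⟨haw.trans hu.1, hu.2.trans_le hy.2⟩ hu0

lemma strictAntiOn_aux {h h' : ℝ → ℝ} {c b : ℝ}
    (hder : ∀ x ∈ Ico c b, HasDerivAt h (h' x) x)
    (hne : ∀ x ∈ Ioo c b, h' x ≠ 0)
    (hbot : Filter.Tendsto h (nhdsWithin b (Iio b)) Filter.atBot) :
    StrictAntiOn h (Ico c b) := by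
  intro x hx y hy hxy
  by_contra hcon
  push Not at hcon
  have h1 : ∀ᶠ z in nhdsWithin b (Iio b), h z < h x := hbot.eventually_lt_atBot _
  have h2 : ∀ᶠ z in nhdsWithin b (Iio b), z ∈ Ioo y b := Ioo_mem_nhdsLT hy.2
  obtain ⟨z, hz1, hz2⟩ := (h1.and h2).exists
  have hc : ContinuousOn h (Ico c b) := fun u hu => (hder u hu).continuousAt.continuousWithinAt
  have hsub : Icc y z ⊆ Ico c b := fun u hu => ⟨hy.1.trans hu.1, hu.2.trans_lt hz2.2⟩
  obtain ⟨w, hw, hwe⟩ := intermediate_value_Icc' hz2.1.le (hc.mono hsub) ⟨hz1.le, hcon⟩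
  have hxw : x < w := hxy.trans_le hw.1
  have hwb : w < b := hw.2.trans_lt hz2.2
  have hsub2 : Icc x w ⊆ Ico c b := fun u hu => ⟨hx.1.trans hu.1, hu.2.trans_lt hwb⟩
  obtain ⟨u, hu, hu0⟩ := exists_hasDerivAt_eq_zero hxw (hc.mono hsub2) hwe.symm
    (fun v hv => hder v (hsub2 ⟨hv.1.le, hv.2.le⟩))
  exact hne u ⟨hx.1.trans_lt hu.1, hu.2.trans hwb⟩ hu0

/-- If `f` and `f'` both converge at infinity, then `f'` converges to zero. -/
lemma deriv_limit_zero {f f' : ℝ → ℝ} {a b : ℝ} (hder : ∀ t, HasDerivAt f (f' t) t)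
    (hf : Filter.Tendsto f Filter.atTop (nhds a))
    (hf' : Filter.Tendsto f' Filter.atTop (nhds b)) : b = 0 := by
  have hex : ∀ t : ℝ, ∃ c ∈ Ioo t (t + 1), f' c = (f (t + 1) - f t) / (t + 1 - t) := fun t =>
    exists_hasDerivAt_eq_slope f f' (by linarith)
      (fun u _ => (hder u).continuousAt.continuousWithinAt) (fun u _ => hder u)
  choose c hc hce using hex
  have h1 : Filter.Tendsto c Filter.atTop Filter.atTop :=
    Filter.tendsto_atTop_mono (fun t => (hc t).1.le) Filter.tendsto_id
  have h2 := hf'.comp h1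
  have h3 : Filter.Tendsto (fun t : ℝ => f (t + 1) - f t) Filter.atTop (nhds (a - a)) :=
    (hf.comp (Filter.tendsto_atTop_add_const_right _ 1 Filter.tendsto_id)).sub hf
  have h4 : (f' ∘ c) = fun t : ℝ => f (t + 1) - f t := by
    funext t
    simp [hce t]
  rw [h4] at h2
  simpa using tendsto_nhds_unique h2 h3

/-- Global uniqueness for autonomous systems that are `C¹` along the first trajectory. -/
lemma ode_unique {v : ℝ × ℝ → ℝ × ℝ} {f g : ℝ → ℝ × ℝ}
    (hv : ∀ t, ContDiffAt ℝ 1 v (f t))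
    (hf : ∀ t, HasDerivAt f (v (f t)) t) (hg : ∀ t, HasDerivAt g (v (g t)) t)
    {t₀ : ℝ} (h0 : f t₀ = g t₀) : ∀ t, f t = g t := by
  have hfc : Continuous f := continuous_iff_continuousAt.2 fun t => (hf t).continuousAt
  have hgc : Continuous g := continuous_iff_continuousAt.2 fun t => (hg t).continuousAt
  have hclosed : IsClosed {t | f t = g t} := isClosed_eq hfc hgc
  have hopen : IsOpen {t | f t = g t} := by
    rw [isOpen_iff_mem_nhds]
    intro t ht
    have ht' : f t = g t := ht
    obtain ⟨K, s, hs, hl⟩ := (hv t).exists_lipschitzOnWith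
    have e1 : ∀ᶠ u in nhds t, f u ∈ s := hfc.continuousAt.eventually hs
    have e2 : ∀ᶠ u in nhds t, g u ∈ s := hgc.continuousAt.eventually (ht' ▸ hs)
    exact ODE_solution_unique_of_eventually (v := fun _ => v) (s := fun _ => s) (K := K)
      (Filter.Eventually.of_forall fun _ => hl)
      (e1.mono fun u hu => ⟨hf u, hu⟩) (e2.mono fun u hu => ⟨hg u, hu⟩) ht'
  have := IsClopen.eq_univ (s := {t | f t = g t}) ⟨hclosed, hopen⟩ ⟨t₀, h0⟩
  intro t
  have : t ∈ {t | f t = g t} := this ▸ mem_univ t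
  exact this

/-! ### The phase space and the function `D` -/

lemma thetaB_mem {β : ℝ} (hβ : 1 ≤ β) : 0 < thetaB β ∧ thetaB β < Real.pi / 2 := by
  refine ⟨?_, Real.arctan_lt_pi_div_two _⟩
  have : 0 < Real.sqrt β := Real.sqrt_pos.2 (by linarith)
  exact Real.arctan_pos.2 (by positivity)

lemma thetaB_zero {β : ℝ} (hβ : 1 ≤ β) :
    Real.sqrt β * Real.sin (thetaB β) - Real.cos (thetaB β) = 0 := by
  have hs : 0 < Real.sqrt β := Real.sqrt_pos.2 (by linarith)
  have hc : 0 < Real.cos (thetaB β) := Real.cos_arctan_pos _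
  have ht : Real.tan (thetaB β) = 1 / Real.sqrt β := Real.tan_arctan _
  rw [Real.tan_eq_sin_div_cos] at ht
  field_simp at ht
  linarith

lemma eq_thetaB {β x : ℝ} (hβ : 1 ≤ β) (h0 : 0 < x) (h1 : x < Real.pi / 2)
    (h : Real.sqrt β * Real.sin x - Real.cos x = 0) : x = thetaB β := by
  have hs : 0 < Real.sqrt β := Real.sqrt_pos.2 (by linarith)
  have hc : 0 < Real.cos x := Real.cos_pos_of_mem_Ioo ⟨by linarith, h1⟩
  have ht : Real.tan x = 1 / Real.sqrt β := by
    rw [Real.tan_eq_sin_div_cos]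
    field_simp
    linarith
  unfold thetaB
  rw [← ht, Real.arctan_tan (by linarith) h1]

lemma Dfun_nonneg {d β : ℝ} (hβ : 1 ≤ β) (x w : ℝ) : 0 ≤ Dfun d β x w := by
  unfold Dfun
  have : 0 < β := by linarith
  positivity

lemma Dfun_pos {d β : ℝ} (hd : 0 < d) (hβ : 1 ≤ β) {x w : ℝ} (h : (x, w) ∈ OmegaB β) :
    0 < Dfun d β x w := by
  have hb : 0 < β := by linarith
  obtain ⟨h0, h1, h2⟩ := h
  simp only at h0 h1
  unfold Dfun
  by_cases hw : w = 0
  · have : Real.sqrt β * Real.sin x - Real.cos x ≠ 0 := by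
      intro hz
      apply h2
      rw [eq_thetaB hβ h0 h1 hz, hw]
    positivity
  · positivity

lemma mem_Omega_of_D {d β : ℝ} (hβ : 1 ≤ β) {x w : ℝ} (h0 : 0 < x) (h1 : x < Real.pi / 2)
    (hD : 0 < Dfun d β x w) : (x, w) ∈ OmegaB β := by
  refine ⟨h0, h1, ?_⟩
  intro h
  rw [Prod.mk.injEq] at h
  rw [h.1, h.2] at hD
  unfold Dfun at hD
  rw [thetaB_zero hβ] at hD
  simp at hD

/-! ### The `W`-independent part of the Hamiltonian -/

def gQ (β x : ℝ) : ℝ :=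
  ((1 - Real.sin x) ^ (β ^ ((3 : ℝ) / 2)) * (1 - Real.cos x)) /
        ((1 + Real.sin x) ^ (β ^ ((3 : ℝ) / 2)) * (1 + Real.cos x))

def gfun (d β x : ℝ) : ℝ := 1 / (2 * d) * Real.log (gQ β x)

lemma Ham_eq (α d β x w : ℝ) :
    Ham α d β x w = gfun d β x - α * Real.sqrt β / Real.sqrt (Dfun d β x w) := by
  unfold Ham gfun gQ
  rw [Real.sqrt_eq_rpow (Dfun d β x w)]

lemma trig_bounds {x : ℝ} (h0 : 0 < x) (h1 : x < Real.pi / 2) :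
    0 < Real.sin x ∧ Real.sin x < 1 ∧ 0 < Real.cos x ∧ Real.cos x < 1 := by
  have hs : 0 < Real.sin x := Real.sin_pos_of_pos_of_lt_pi h0 (by linarith)
  have hc : 0 < Real.cos x := Real.cos_pos_of_mem_Ioo ⟨by linarith, h1⟩
  have := Real.sin_sq_add_cos_sq x
  refine ⟨hs, by nlinarith, hc, by nlinarith⟩

lemma gQ_pos {β x : ℝ} (h0 : 0 < x) (h1 : x < Real.pi / 2) : 0 < gQ β x := by
  obtain ⟨a, b, c, e⟩ := trig_bounds h0 h1
  unfold gQ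
  have : 0 < 1 - Real.sin x := by linarith
  have : 0 < 1 - Real.cos x := by linarith
  positivity

lemma gfun_eq {d β x : ℝ} (h0 : 0 < x) (h1 : x < Real.pi / 2) :
    gfun d β x = 1 / (2 * d) * (β ^ ((3 : ℝ) / 2) * Real.log (1 - Real.sin x)
      + Real.log (1 - Real.cos x) - β ^ ((3 : ℝ) / 2) * Real.log (1 + Real.sin x)
      - Real.log (1 + Real.cos x)) := by
  obtain ⟨a, b, c, e⟩ := trig_bounds h0 h1
  have h1 : 0 < 1 - Real.sin x := by linarith
  have h2 : 0 < 1 - Real.cos x := by linarith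
  have h3 : 0 < 1 + Real.sin x := by linarith
  have h4 : 0 < 1 + Real.cos x := by linarith
  unfold gfun gQ
  rw [Real.log_div (by positivity) (by positivity), Real.log_mul (by positivity) (by positivity),
    Real.log_mul (by positivity) (by positivity), Real.log_rpow h1, Real.log_rpow h3]
  ring

def g' (d β x : ℝ) : ℝ :=
  -((β ^ ((3 : ℝ) / 2) * Real.sin x - Real.cos x) / (d * Real.sin x * Real.cos x))

lemma gfun_hasDerivAt {d β x : ℝ} (hd : 0 < d) (h0 : 0 < x) (h1 : x < Real.pi / 2) :
    HasDerivAt (gfun d β) (g' d β x) x := by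
  obtain ⟨a, b, c, e⟩ := trig_bounds h0 h1
  have k1 : 1 - Real.sin x ≠ 0 := by linarith
  have k2 : 1 - Real.cos x ≠ 0 := by linarith
  have k3 : 1 + Real.sin x ≠ 0 := by linarith
  have k4 : 1 + Real.cos x ≠ 0 := by linarith
  have hs := Real.hasDerivAt_sin x
  have hc := Real.hasDerivAt_cos x
  have l1 := ((hs.const_sub 1).log k1).const_mul (β ^ ((3 : ℝ) / 2))
  have l2 := (hc.const_sub 1).log k2
  have l3 := ((hs.const_add 1).log k3).const_mul (β ^ ((3 : ℝ) / 2))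
  have l4 := (hc.const_add 1).log k4
  have l := (((l1.add l2).sub l3).sub l4).const_mul (1 / (2 * d))
  have hev : gfun d β =ᶠ[nhds x] fun x => 1 / (2 * d) *
      (β ^ ((3 : ℝ) / 2) * Real.log (1 - Real.sin x)
      + Real.log (1 - Real.cos x) - β ^ ((3 : ℝ) / 2) * Real.log (1 + Real.sin x)
      - Real.log (1 + Real.cos x)) := by
    filter_upwards [Ioo_mem_nhds h0 h1] with y hy
    exact gfun_eq hy.1 hy.2
  refine HasDerivAt.congr_of_eventuallyEq ?_ hev
  refine HasDerivAt.congr_deriv l ?_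
  unfold g'
  have e1 : -Real.cos x / (1 - Real.sin x) = -(1 + Real.sin x) / Real.cos x := by
    rw [div_eq_div_iff k1 c.ne']
    nlinarith [Real.sin_sq_add_cos_sq x]
  have e2 : Real.cos x / (1 + Real.sin x) = (1 - Real.sin x) / Real.cos x := by
    rw [div_eq_div_iff k3 c.ne']
    nlinarith [Real.sin_sq_add_cos_sq x]
  have e3 : - -Real.sin x / (1 - Real.cos x) = (1 + Real.cos x) / Real.sin x := by
    rw [div_eq_div_iff k2 a.ne']
    nlinarith [Real.sin_sq_add_cos_sq x]
  have e4 : -Real.sin x / (1 + Real.cos x) = -(1 - Real.cos x) / Real.sin x := by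
    rw [div_eq_div_iff k4 a.ne']
    nlinarith [Real.sin_sq_add_cos_sq x]
  simp only [e1, e2, e3, e4]
  field_simp
  ring

lemma gfun_concave {d β : ℝ} (hd : 0 < d) (hβ : 1 ≤ β) :
    ConcaveOn ℝ (Ioo 0 (Real.pi / 2)) (gfun d β) := by
  have hp : 0 ≤ β ^ ((3 : ℝ) / 2) := Real.rpow_nonneg (by linarith) _
  refine AntitoneOn.concaveOn_of_deriv (convex_Ioo _ _)
    (fun x hx => (gfun_hasDerivAt hd hx.1 hx.2).continuousAt.continuousWithinAt)
    (fun x hx => ?_) ?_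
  · rw [interior_Ioo] at hx
    exact (gfun_hasDerivAt hd hx.1 hx.2).differentiableAt.differentiableWithinAt
  · rw [interior_Ioo]
    intro x hx y hy hxy
    rw [(gfun_hasDerivAt hd hx.1 hx.2).deriv, (gfun_hasDerivAt hd hy.1 hy.2).deriv]
    have key : ∀ z ∈ Ioo 0 (Real.pi / 2),
        g' d β z = 1 / d * (1 / Real.sin z - β ^ ((3 : ℝ) / 2) * (1 / Real.cos z)) := by
      intro z hz
      obtain ⟨a, b, c, e⟩ := trig_bounds hz.1 hz.2
      unfold g'
      field_simp
      ring
    rw [key x hx, key y hy]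
    obtain ⟨ax, bx, cx, ex⟩ := trig_bounds hx.1 hx.2
    obtain ⟨ay, b_y, cy, ey⟩ := trig_bounds hy.1 hy.2
    have hsin : Real.sin x ≤ Real.sin y :=
      Real.sin_le_sin_of_le_of_le_pi_div_two (by linarith [hx.1, Real.pi_pos]) hy.2.le hxy
    have hcos : Real.cos y ≤ Real.cos x :=
      Real.cos_le_cos_of_nonneg_of_le_pi hx.1.le (by linarith [hy.2, Real.pi_pos]) hxy
    have i1 : 1 / Real.sin y ≤ 1 / Real.sin x := one_div_le_one_div_of_le ax hsin
    have i2 : 1 / Real.cos x ≤ 1 / Real.cos y := one_div_le_one_div_of_le cy hcos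
    have i3 := mul_le_mul_of_nonneg_left i2 hp
    exact mul_le_mul_of_nonneg_left (by linarith) (by positivity)

lemma gfun_tendsto_aux {d β a : ℝ} {l : Filter ℝ} (hd : 0 < d)
    (hl : l ≤ nhds a) (hc : ContinuousAt (gQ β) a) (hz : gQ β a = 0)
    (hpos : ∀ᶠ x in l, 0 < gQ β x) : Filter.Tendsto (gfun d β) l Filter.atBot := by
  have h1 : Filter.Tendsto (gQ β) l (nhdsWithin 0 (Ioi 0)) := by
    rw [tendsto_nhdsWithin_iff]
    refine ⟨?_, hpos⟩
    rw [← hz]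
    exact hc.tendsto.mono_left hl
  exact (Real.tendsto_log_nhdsGT_zero.comp h1).const_mul_atBot (by positivity)

lemma gQ_continuousAt {β a : ℝ} (hβ : 1 ≤ β) (hs : 0 ≤ Real.sin a) (hc : 0 ≤ Real.cos a) :
    ContinuousAt (gQ β) a := by
  have hp : 0 < β ^ ((3 : ℝ) / 2) := Real.rpow_pos_of_pos (by linarith) _
  unfold gQ
  have c1 : ContinuousAt (fun x => (1 - Real.sin x) ^ (β ^ ((3 : ℝ) / 2))) a :=
    ContinuousAt.rpow_const (by fun_prop) (Or.inr hp.le)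
  have c2 : ContinuousAt (fun x => (1 + Real.sin x) ^ (β ^ ((3 : ℝ) / 2))) a :=
    ContinuousAt.rpow_const (by fun_prop) (Or.inr hp.le)
  refine ContinuousAt.div (c1.mul (by fun_prop)) (c2.mul (by fun_prop)) ?_
  have : 0 < 1 + Real.sin a := by linarith
  have : 0 < 1 + Real.cos a := by linarith
  positivity

lemma gfun_tendsto_zero {d β : ℝ} (hd : 0 < d) (hβ : 1 ≤ β) :
    Filter.Tendsto (gfun d β) (nhdsWithin 0 (Ioi 0)) Filter.atBot := by
  refine gfun_tendsto_aux hd nhdsWithin_le_nhds (gQ_continuousAt hβ (by simp) (by simp))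
    (by simp [gQ]) ?_
  filter_upwards [Ioo_mem_nhdsGT (by positivity : (0 : ℝ) < Real.pi / 2)] with x hx
  exact gQ_pos hx.1 hx.2

lemma gfun_tendsto_pi {d β : ℝ} (hd : 0 < d) (hβ : 1 ≤ β) :
    Filter.Tendsto (gfun d β) (nhdsWithin (Real.pi / 2) (Iio (Real.pi / 2))) Filter.atBot := by
  have hp : 0 < β ^ ((3 : ℝ) / 2) := Real.rpow_pos_of_pos (by linarith) _
  refine gfun_tendsto_aux hd nhdsWithin_le_nhds (gQ_continuousAt hβ (by simp) (by simp))
    (by simp [gQ, Real.zero_rpow hp.ne']) ?_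
  filter_upwards [Ioo_mem_nhdsLT (by positivity : (0 : ℝ) < Real.pi / 2)] with x hx
  exact gQ_pos hx.1 hx.2

/-! ### Differentiating the Hamiltonian -/

lemma rpow_three_half {D : ℝ} (hD : 0 < D) : D ^ ((3 : ℝ) / 2) = D * Real.sqrt D := by
  rw [show (3 : ℝ) / 2 = 1 + 1 / 2 by norm_num, Real.rpow_add hD, Real.rpow_one,
    Real.sqrt_eq_rpow]

lemma Ham_hasDerivAt {α d β : ℝ} (hd : 0 < d) (hβ : 1 ≤ β) {x w : ℝ → ℝ} {t a b : ℝ}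
    (hm : (x t, w t) ∈ OmegaB β) (hx : HasDerivAt x a t) (hw : HasDerivAt w b t) :
    HasDerivAt (fun s => Ham α d β (x s) (w s))
      (-F2 α d β (x t) (w t) * a + F1 α d β (x t) (w t) * b) t := by
  have hD := Dfun_pos hd hβ hm
  have hb : 0 < Real.sqrt β := Real.sqrt_pos.2 (by linarith)
  have hg := (gfun_hasDerivAt (β := β) hd hm.1 hm.2.1).comp t hx
  have hDd : HasDerivAt (fun s => Dfun d β (x s) (w s))
      (d ^ 2 / β * (2 * (Real.sqrt β * Real.sin (x t) - Real.cos (x t)) *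
        (Real.sqrt β * (Real.cos (x t) * a) - (-Real.sin (x t) * a))) + 2 * w t * b) t := by
    unfold Dfun
    have h1 := (((hx.sin.const_mul (Real.sqrt β)).sub hx.cos).pow 2).const_mul (d ^ 2 / β)
    have h2 := hw.pow 2
    refine HasDerivAt.congr_deriv (h1.add h2) ?_
    simp
  have hsq := hDd.sqrt hD.ne'
  have hsD : 0 < Real.sqrt (Dfun d β (x t) (w t)) := Real.sqrt_pos.2 hD
  have hall := hg.sub ((hasDerivAt_const t (α * Real.sqrt β)).div hsq hsD.ne')
  have hfun : (fun s => Ham α d β (x s) (w s)) = (gfun d β ∘ x) -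
      ((fun _ => α * Real.sqrt β) / fun s => Real.sqrt (Dfun d β (x s) (w s))) := by
    funext s
    simp [Ham_eq]
  rw [hfun]
  refine HasDerivAt.congr_deriv hall ?_
  unfold F1 F2
  rw [rpow_three_half hD]
  have hss : Real.sqrt (Dfun d β (x t) (w t)) ^ 2 = Dfun d β (x t) (w t) := Real.sq_sqrt hD.le
  generalize Real.sqrt (Dfun d β (x t) (w t)) = S at *
  rw [← hss]
  rw [← hss] at hD
  have hbb : β = Real.sqrt β ^ 2 := (Real.sq_sqrt (by linarith)).symm
  unfold g'
  have e1 : d ^ 2 / β = d ^ 2 / Real.sqrt β ^ 2 := by rw [← hbb]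
  rw [e1]
  generalize Real.sqrt β = B at *
  generalize (β ^ ((3 : ℝ) / 2) * Real.sin (x t) - Real.cos (x t)) /
    (d * Real.sin (x t) * Real.cos (x t)) = G
  field_simp
  ring

/-! ### Smoothness of the vector field and properties of the Hamiltonian -/

def vF (α d β : ℝ) (p : ℝ × ℝ) : ℝ × ℝ := (F1 α d β p.1 p.2, F2 α d β p.1 p.2)

lemma vF_contDiffAt {α d β : ℝ} (hd : 0 < d) (hβ : 1 ≤ β) {p : ℝ × ℝ} (hp : p ∈ OmegaB β) :
    ContDiffAt ℝ 1 (vF α d β) p := by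
  have hD : 0 < Dfun d β p.1 p.2 := Dfun_pos hd hβ hp
  obtain ⟨a, b, c, e⟩ := trig_bounds hp.1 hp.2.1
  have hb : 0 < Real.sqrt β := Real.sqrt_pos.2 (by linarith)
  have hDc : ContDiffAt ℝ 1 (fun p : ℝ × ℝ => Dfun d β p.1 p.2) p := by
    unfold Dfun
    fun_prop
  have hDr : ContDiffAt ℝ 1 (fun p : ℝ × ℝ => Dfun d β p.1 p.2 ^ ((3 : ℝ) / 2)) p :=
    hDc.rpow_const_of_ne hD.ne'
  have hDrne : Dfun d β p.1 p.2 ^ ((3 : ℝ) / 2) ≠ 0 := (Real.rpow_pos_of_pos hD _).ne'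
  unfold vF F1 F2
  refine ContDiffAt.prodMk ?_ ?_
  · exact ContDiffAt.div (by fun_prop) hDr hDrne
  · refine ContDiffAt.sub ?_ ?_
    · exact ContDiffAt.div (by fun_prop) (by fun_prop) (by positivity)
    · exact ContDiffAt.div (by fun_prop) (contDiffAt_const.mul hDr) (mul_ne_zero hb.ne' hDrne)

lemma F1_eq_zero {α d β x w : ℝ} (hα : 0 < α) (hd : 0 < d) (hβ : 1 ≤ β)
    (hm : (x, w) ∈ OmegaB β) (h : F1 α d β x w = 0) : w = 0 := by
  have hD := Dfun_pos hd hβ hm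
  have hb : 0 < Real.sqrt β := Real.sqrt_pos.2 (by linarith)
  have hDrne : Dfun d β x w ^ ((3 : ℝ) / 2) ≠ 0 := (Real.rpow_pos_of_pos hD _).ne'
  unfold F1 at h
  rw [div_eq_zero_iff] at h
  rcases h with h | h
  · rcases mul_eq_zero.1 h with h | h
    · exact absurd h (by positivity)
    · exact h
  · exact absurd h hDrne

lemma Dfun_split (d β x w : ℝ) : Dfun d β x w = Dfun d β x 0 + w ^ 2 := by
  unfold Dfun
  ring

lemma Dfun_neg (d β x w : ℝ) : Dfun d β x (-w) = Dfun d β x w := by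
  unfold Dfun
  ring

lemma Ham_zero_le {α d β x w : ℝ} (hα : 0 < α) (hd : 0 < d) (hβ : 1 ≤ β)
    (hm : (x, (0 : ℝ)) ∈ OmegaB β) : Ham α d β x 0 ≤ Ham α d β x w := by
  have hD := Dfun_pos hd hβ hm
  rw [Ham_eq, Ham_eq]
  have h1 : Real.sqrt (Dfun d β x 0) ≤ Real.sqrt (Dfun d β x w) := by
    apply Real.sqrt_le_sqrt
    rw [Dfun_split d β x w]
    nlinarith [sq_nonneg w]
  have h2 : 0 < Real.sqrt (Dfun d β x 0) := Real.sqrt_pos.2 hD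
  have := div_le_div_of_nonneg_left (by positivity : 0 ≤ α * Real.sqrt β) h2 h1
  linarith

lemma Ham_lt_gfun {α d β x w : ℝ} (hα : 0 < α) (hd : 0 < d) (hβ : 1 ≤ β)
    (hm : (x, w) ∈ OmegaB β) : Ham α d β x w < gfun d β x := by
  have hD := Real.sqrt_pos.2 (Dfun_pos hd hβ hm)
  have hb : 0 < Real.sqrt β := Real.sqrt_pos.2 (by linarith)
  rw [Ham_eq]
  have : 0 < α * Real.sqrt β / Real.sqrt (Dfun d β x w) := by positivity
  linarith

/-- The value of `D` is determined by the angle and the energy. -/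
lemma D_eq {α d β x w : ℝ} (hα : 0 < α) (hd : 0 < d) (hβ : 1 ≤ β) (hm : (x, w) ∈ OmegaB β) :
    Dfun d β x w = (α * Real.sqrt β / (gfun d β x - Ham α d β x w)) ^ 2 := by
  have hD := Dfun_pos hd hβ hm
  have hD' := Real.sqrt_pos.2 hD
  have hb : 0 < Real.sqrt β := Real.sqrt_pos.2 (by linarith)
  rw [Ham_eq]
  have e : α * Real.sqrt β / (gfun d β x - (gfun d β x - α * Real.sqrt β /
      Real.sqrt (Dfun d β x w))) = Real.sqrt (Dfun d β x w) := by
    rw [sub_sub_cancel]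
    field_simp
  rw [e, Real.sq_sqrt hD.le]

lemma h_tendsto_thetaB {α d β : ℝ} (hα : 0 < α) (hd : 0 < d) (hβ : 1 ≤ β) :
    Filter.Tendsto (fun x => Ham α d β x 0) (nhdsWithin (thetaB β) {thetaB β}ᶜ)
      Filter.atBot := by
  have hb : 0 < Real.sqrt β := Real.sqrt_pos.2 (by linarith)
  obtain ⟨t0, t1⟩ := thetaB_mem hβ
  have hg : Filter.Tendsto (gfun d β) (nhdsWithin (thetaB β) {thetaB β}ᶜ)
      (nhds (gfun d β (thetaB β))) :=
    (gfun_hasDerivAt hd t0 t1).continuousAt.tendsto.mono_left nhdsWithin_le_nhds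
  have hS : Filter.Tendsto (fun x => Real.sqrt (Dfun d β x 0))
      (nhdsWithin (thetaB β) {thetaB β}ᶜ) (nhdsWithin 0 (Ioi 0)) := by
    rw [tendsto_nhdsWithin_iff]
    constructor
    · have hc : Continuous (fun x => Real.sqrt (Dfun d β x 0)) := by
        unfold Dfun
        fun_prop
      have h0 : Real.sqrt (Dfun d β (thetaB β) 0) = 0 := by
        unfold Dfun
        rw [thetaB_zero hβ]
        simp
      have := hc.tendsto (thetaB β)
      rw [h0] at this
      exact this.mono_left nhdsWithin_le_nhds
    · filter_upwards [self_mem_nhdsWithin, nhdsWithin_le_nhds (Ioo_mem_nhds t0 t1)] with x hx hx2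
      refine Real.sqrt_pos.2 (Dfun_pos hd hβ ⟨hx2.1, hx2.2, ?_⟩)
      intro h
      exact hx (Prod.mk.inj h).1
  have hinv := (tendsto_inv_nhdsGT_zero.comp hS).const_mul_atTop
    (by positivity : 0 < α * Real.sqrt β)
  have := hg.add_atBot (Filter.tendsto_neg_atTop_atBot.comp hinv)
  refine this.congr fun x => ?_
  simp only [Function.comp, Ham_eq, div_eq_mul_inv]
  ring

lemma h_le_gfun {α d β x w : ℝ} (hα : 0 < α) : Ham α d β x w ≤ gfun d β x := by
  rw [Ham_eq]
  have : 0 ≤ α * Real.sqrt β / Real.sqrt (Dfun d β x w) := by positivity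
  linarith

lemma h_tendsto_zero {α d β : ℝ} (hα : 0 < α) (hd : 0 < d) (hβ : 1 ≤ β) :
    Filter.Tendsto (fun x => Ham α d β x 0) (nhdsWithin 0 (Ioi 0)) Filter.atBot :=
  Filter.tendsto_atBot_mono (fun _ => h_le_gfun hα) (gfun_tendsto_zero hd hβ)

lemma h_tendsto_pi {α d β : ℝ} (hα : 0 < α) (hd : 0 < d) (hβ : 1 ≤ β) :
    Filter.Tendsto (fun x => Ham α d β x 0) (nhdsWithin (Real.pi / 2) (Iio (Real.pi / 2)))
      Filter.atBot :=
  Filter.tendsto_atBot_mono (fun _ => h_le_gfun hα) (gfun_tendsto_pi hd hβ)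

lemma mem_Omega_zero {β x : ℝ} (h0 : 0 < x) (h1 : x < Real.pi / 2) (hne : x ≠ thetaB β) :
    (x, (0 : ℝ)) ∈ OmegaB β :=
  ⟨h0, h1, fun h => hne (Prod.mk.inj h).1⟩

lemma h_hasDerivAt {α d β x : ℝ} (hd : 0 < d) (hβ : 1 ≤ β) (hm : (x, (0 : ℝ)) ∈ OmegaB β) :
    HasDerivAt (fun x => Ham α d β x 0) (-F2 α d β x 0) x := by
  have := Ham_hasDerivAt (α := α) hd hβ (x := id) (w := fun _ => 0) (t := x) hm
    (hasDerivAt_id x) (hasDerivAt_const x 0)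
  simpa using this

lemma F1_zero (α d β x : ℝ) : F1 α d β x 0 = 0 := by simp [F1]

/-! ### Properties of solutions -/

section solution

variable {α d β : ℝ} {θ W : ℝ → ℝ}

lemma sol_hasDerivAt (hsol : IsSolution α d β θ W) (t : ℝ) :
    HasDerivAt (fun t => (θ t, W t)) (vF α d β (θ t, W t)) t :=
  (hsol.2.1 t).prodMk (hsol.2.2 t)

lemma sol_contθ (hsol : IsSolution α d β θ W) : Continuous θ :=
  continuous_iff_continuousAt.2 fun t => (hsol.2.1 t).continuousAt

lemma sol_contW (hsol : IsSolution α d β θ W) : Continuous W :=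
  continuous_iff_continuousAt.2 fun t => (hsol.2.2 t).continuousAt

lemma sol_conserved (hd : 0 < d) (hβ : 1 ≤ β) (hsol : IsSolution α d β θ W) (s t : ℝ) :
    Ham α d β (θ s) (W s) = Ham α d β (θ t) (W t) := by
  have key : ∀ t, HasDerivAt (fun s => Ham α d β (θ s) (W s)) 0 t := by
    intro t
    refine (Ham_hasDerivAt hd hβ (hsol.1 t) (hsol.2.1 t) (hsol.2.2 t)).congr_deriv ?_
    ring
  exact is_const_of_deriv_eq_zero (fun t => (key t).differentiableAt)
    (fun t => (key t).deriv) s t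

lemma sol_reflect (hd : 0 < d) (hβ : 1 ≤ β) (hsol : IsSolution α d β θ W) {τ : ℝ}
    (hτ : W τ = 0) (s : ℝ) : θ (2 * τ - s) = θ s ∧ W (2 * τ - s) = -W s := by
  have hg : ∀ t, HasDerivAt (fun t => (θ (2 * τ - t), -W (2 * τ - t)))
      (vF α d β (θ (2 * τ - t), -W (2 * τ - t))) t := by
    intro t
    have h0 : HasDerivAt (fun t => 2 * τ - t) (-1) t := (hasDerivAt_id t).const_sub _
    have h1 := (hsol.2.1 (2 * τ - t)).comp t h0
    have h2 := ((hsol.2.2 (2 * τ - t)).comp t h0).neg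
    refine (h1.prodMk h2).congr_deriv ?_
    unfold vF F1 F2
    simp only [Dfun_neg]
    ext
    · simp only
      ring
    · simp only
      ring
  have := ode_unique (v := vF α d β) (f := fun t => (θ t, W t))
    (g := fun t => (θ (2 * τ - t), -W (2 * τ - t))) (t₀ := τ)
    (fun t => vF_contDiffAt hd hβ (hsol.1 t)) (sol_hasDerivAt hsol) hg
    (by simp [show 2 * τ - τ = τ by ring, hτ]) s
  simp only [Prod.mk.injEq] at this
  exact ⟨this.1.symm, by rw [this.2]; ring⟩

lemma sol_const (hd : 0 < d) (hβ : 1 ≤ β) (hsol : IsSolution α d β θ W) {τ : ℝ}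
    (h1 : F1 α d β (θ τ) (W τ) = 0) (h2 : F2 α d β (θ τ) (W τ) = 0) (s : ℝ) :
    (θ s, W s) = (θ τ, W τ) := by
  have hg : ∀ t, HasDerivAt (fun _ : ℝ => (θ τ, W τ)) (vF α d β (θ τ, W τ)) t := by
    intro t
    refine (hasDerivAt_const t (θ τ, W τ)).congr_deriv ?_
    simp only [vF, h1, h2]
    rfl
  exact ode_unique (v := vF α d β) (f := fun t => (θ t, W t)) (g := fun _ => (θ τ, W τ)) (t₀ := τ)
    (fun t => vF_contDiffAt hd hβ (hsol.1 t)) (sol_hasDerivAt hsol) hg rfl s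

lemma mono_conv {f f' : ℝ → ℝ} {t₀ M : ℝ} (hder : ∀ t, HasDerivAt f (f' t) t)
    (hpos : ∀ t, t₀ < t → 0 ≤ f' t) (hM : ∀ t, f t ≤ M) :
    ∃ L, Filter.Tendsto f Filter.atTop (nhds L) := by
  have hmono : MonotoneOn f (Ici t₀) := by
    refine monotoneOn_of_deriv_nonneg (convex_Ici _)
      (fun t _ => (hder t).continuousAt.continuousWithinAt)
      (fun t _ => (hder t).differentiableAt.differentiableWithinAt) ?_
    intro t ht
    rw [interior_Ici] at ht
    rw [(hder t).deriv]
    exact hpos t ht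
  have hm : Monotone (fun t => f (max t t₀)) := fun s t hst =>
    hmono (mem_Ici.2 (le_max_right _ _)) (mem_Ici.2 (le_max_right _ _)) (max_le_max_right _ hst)
  refine ⟨_, (tendsto_atTop_ciSup hm ⟨M, ?_⟩).congr' ?_⟩
  · rintro _ ⟨t, rfl⟩
    exact hM _
  · filter_upwards [Filter.eventually_ge_atTop t₀] with t ht
    rw [max_eq_left ht]

lemma sqrtD_tendsto {l : Filter ℝ} {L w : ℝ} (hL : Filter.Tendsto θ l (nhds L))
    (hw : Filter.Tendsto W l (nhds w)) :
    Filter.Tendsto (fun t => Real.sqrt (Dfun d β (θ t) (W t))) l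
      (nhds (Real.sqrt (Dfun d β L w))) := by
  refine (Real.continuous_sqrt.tendsto _).comp ?_
  unfold Dfun
  have hs := (Real.continuous_sin.tendsto _).comp hL
  have hc := (Real.continuous_cos.tendsto _).comp hL
  exact ((((hs.const_mul (Real.sqrt β)).sub hc).pow 2).const_mul (d ^ 2 / β)).add (hw.pow 2)

/-- A trajectory trapped in a strip without equilibria on its energy level returns to the axis. -/
lemma sol_returns (hα : 0 < α) (hd : 0 < d) (hβ : 1 ≤ β) (hsol : IsSolution α d β θ W)
    {a b E : ℝ} (ha : 0 < a) (hb : b < Real.pi / 2) (hstrip : ∀ t, θ t ∈ Icc a b)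
    (hE : ∀ t, Ham α d β (θ t) (W t) = E)
    (hgE : ∀ x ∈ Icc a b, E < gfun d β x)
    (hne : ∀ x ∈ Icc a b, (x, (0 : ℝ)) ∈ OmegaB β → F2 α d β x 0 = 0 → Ham α d β x 0 ≠ E)
    (t₀ : ℝ) : ∃ t, t₀ < t ∧ W t = 0 := by
  by_contra hcon
  push Not at hcon
  have hb' : 0 < Real.sqrt β := Real.sqrt_pos.2 (by linarith)
  have hWc := sol_contW hsol
  -- constant sign
  have hsign : (∀ t, t₀ < t → 0 < W t) ∨ (∀ t, t₀ < t → W t < 0) := by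
    by_contra hc
    push Not at hc
    obtain ⟨⟨s, hs, hs'⟩, ⟨u, hu, hu'⟩⟩ := hc
    obtain ⟨c, hc, hc0⟩ := (isPreconnected_Ioi (a := t₀)).intermediate_value hs hu
      hWc.continuousOn ⟨hs', hu'⟩
    exact hcon c hc hc0
  have hF1 : ∀ t, F1 α d β (θ t) (W t) =
      α * Real.sqrt β / Dfun d β (θ t) (W t) ^ ((3 : ℝ) / 2) * W t := by
    intro t
    unfold F1
    ring
  have hcoef : ∀ t, 0 ≤ α * Real.sqrt β / Dfun d β (θ t) (W t) ^ ((3 : ℝ) / 2) := by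
    intro t
    have := Real.rpow_pos_of_pos (Dfun_pos hd hβ (hsol.1 t)) ((3 : ℝ) / 2)
    positivity
  have hθlim : ∃ L, Filter.Tendsto θ Filter.atTop (nhds L) := by
    rcases hsign with h | h
    · refine mono_conv (t₀ := t₀) hsol.2.1 (fun t ht => ?_) (fun t => (hstrip t).2)
      rw [hF1]
      exact mul_nonneg (hcoef t) (h t ht).le
    · have hp : ∀ t, t₀ < t → 0 ≤ -F1 α d β (θ t) (W t) := by
        intro t ht
        rw [hF1]
        have := mul_nonneg (hcoef t) (neg_nonneg.2 (h t ht).le)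
        linarith
      obtain ⟨L, hL⟩ := mono_conv (f := fun t => -θ t) (t₀ := t₀) (M := -a)
        (fun t => (hsol.2.1 t).neg) hp (fun t => neg_le_neg (hstrip t).1)
      exact ⟨-L, by simpa using hL.neg⟩
  obtain ⟨L, hL⟩ := hθlim
  have hLm : L ∈ Icc a b := isClosed_Icc.mem_of_tendsto hL (Filter.Eventually.of_forall hstrip)
  have hL0 : 0 < L := ha.trans_le hLm.1
  have hL1 : L < Real.pi / 2 := hLm.2.trans_lt hb
  -- limit of W ^ 2
  have hWsq : ∀ t, W t ^ 2 = (α * Real.sqrt β / (gfun d β (θ t) - E)) ^ 2 - Dfun d β (θ t) 0 := by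
    intro t
    have h1 := D_eq hα hd hβ (hsol.1 t)
    rw [hE t, Dfun_split] at h1
    linarith
  have hgL := hgE L hLm
  have hgc : Filter.Tendsto (fun t => gfun d β (θ t)) Filter.atTop (nhds (gfun d β L)) :=
    (gfun_hasDerivAt hd hL0 hL1).continuousAt.tendsto.comp hL
  have hDc : Filter.Tendsto (fun t => Dfun d β (θ t) 0) Filter.atTop (nhds (Dfun d β L 0)) := by
    have : Continuous (fun x => Dfun d β x 0) := by
      unfold Dfun
      fun_prop
    exact (this.tendsto L).comp hL
  have hWsql : Filter.Tendsto (fun t => W t ^ 2) Filter.atTop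
      (nhds ((α * Real.sqrt β / (gfun d β L - E)) ^ 2 - Dfun d β L 0)) := by
    simp only [hWsq]
    exact ((tendsto_const_nhds.div (hgc.sub_const E) (by linarith)).pow 2).sub hDc
  have hWlim : ∃ w, Filter.Tendsto W Filter.atTop (nhds w) := by
    have hs := (Real.continuous_sqrt.tendsto _).comp hWsql
    rcases hsign with h | h
    · refine ⟨_, hs.congr' ?_⟩
      filter_upwards [Filter.eventually_gt_atTop t₀] with t ht
      simp [Real.sqrt_sq (h t ht).le]
    · refine ⟨_, hs.neg.congr' ?_⟩
      filter_upwards [Filter.eventually_gt_atTop t₀] with t ht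
      simp [Real.sqrt_sq_eq_abs, abs_of_neg (h t ht)]
  obtain ⟨w, hw⟩ := hWlim
  have hw2 : w ^ 2 = (α * Real.sqrt β / (gfun d β L - E)) ^ 2 - Dfun d β L 0 :=
    tendsto_nhds_unique (hw.pow 2) hWsql
  have hDL : 0 < Dfun d β L w := by
    rw [Dfun_split, hw2]
    have : 0 < gfun d β L - E := by linarith
    have : 0 < (α * Real.sqrt β / (gfun d β L - E)) ^ 2 := by positivity
    linarith
  have hLO : (L, w) ∈ OmegaB β := mem_Omega_of_D hβ hL0 hL1 hDL
  have hvc : Filter.Tendsto (fun t => vF α d β (θ t, W t)) Filter.atTop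
      (nhds (vF α d β (L, w))) :=
    (vF_contDiffAt hd hβ hLO).continuousAt.tendsto.comp (hL.prodMk_nhds hw)
  have z1 : F1 α d β L w = 0 := deriv_limit_zero hsol.2.1 hL
    ((continuous_fst.tendsto _).comp hvc)
  have z2 : F2 α d β L w = 0 := deriv_limit_zero hsol.2.2 hw
    ((continuous_snd.tendsto _).comp hvc)
  have hw0 := F1_eq_zero hα hd hβ hLO z1
  subst hw0
  refine hne L hLm hLO z2 ?_
  have hHc : Filter.Tendsto (fun t => Ham α d β (θ t) (W t)) Filter.atTop
      (nhds (Ham α d β L 0)) := by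
    have hsq := sqrtD_tendsto (d := d) (β := β) hL hw
    simp only [Ham_eq]
    exact hgc.sub (Filter.Tendsto.div tendsto_const_nhds hsq (Real.sqrt_pos.2 hDL).ne')
  simp only [hE] at hHc
  exact tendsto_nhds_unique hHc tendsto_const_nhds

/-- A trajectory with energy below that of `(x, 0)` cannot have angle `x`. -/
lemma sol_ne (hα : 0 < α) (hd : 0 < d) (hβ : 1 ≤ β) {E x : ℝ}
    (hE : ∀ t, Ham α d β (θ t) (W t) = E)
    (hx : (x, (0 : ℝ)) ∈ OmegaB β) (hlt : E < Ham α d β x 0) (t : ℝ) : θ t ≠ x := by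
  intro h
  have h1 := hE t
  rw [h] at h1
  have := Ham_zero_le (w := W t) hα hd hβ hx
  linarith

end solution

/-- Lemma 3.1: characterization of leapfrogging for initial data of the form
(θ₀, 0), given the two equilibrium points (θ_*, 0) and (θ_**, 0). -/
theorem leapfrog_characterization_initial_W_zero
    (α d β : ℝ) (hα : 0 < α) (hα' : α < 1 / 3) (hd : 0 < d) (hβ : 1 ≤ β)
    (θs θss : ℝ)
    (hθs : 0 < θs ∧ θs < thetaB β)
    (hθss : thetaB β < θss ∧ θss < Real.pi / 2)
    (heqs : F1 α d β θs 0 = 0 ∧ F2 α d β θs 0 = 0)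
    (heqss : F1 α d β θss 0 = 0 ∧ F2 α d β θss 0 = 0)
    (honly : ∀ p ∈ OmegaB β, F1 α d β p.1 p.2 = 0 → F2 α d β p.1 p.2 = 0 →
      p = (θs, 0) ∨ p = (θss, 0))
    (θ₀ : ℝ) (h₀ : (θ₀, (0 : ℝ)) ∈ OmegaB β)
    (θ W : ℝ → ℝ) (hsol : IsSolution α d β θ W)
    (hinit : θ 0 = θ₀ ∧ W 0 = 0) :
    (θ₀ ∈ Set.Ioo θs θss ∧
        Ham α d β θ₀ 0 < min (Ham α d β θs 0) (Ham α d β θss 0) →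
      IsLeapfrog β θ W ∧
        Set.range (fun t => (θ t, W t)) =
          {p ∈ OmegaB β | Ham α d β p.1 p.2 = Ham α d β θ₀ 0} ∩
            Set.Icc θs θss ×ˢ (Set.univ : Set ℝ)) ∧
    (¬ (θ₀ ∈ Set.Ioo θs θss ∧
        Ham α d β θ₀ 0 < min (Ham α d β θs 0) (Ham α d β θss 0)) →
      ¬ IsLeapfrog β θ W) := by
  obtain ⟨tB0, tB1⟩ := thetaB_mem hβ
  obtain ⟨hs0, hsB⟩ := hθs
  obtain ⟨hBss, hss1⟩ := hθss
  obtain ⟨hi0, hi1⟩ := hinit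
  have hsO : (θs, (0 : ℝ)) ∈ OmegaB β := mem_Omega_zero hs0 (hsB.trans tB1) hsB.ne
  have hssO : (θss, (0 : ℝ)) ∈ OmegaB β := mem_Omega_zero (tB0.trans hBss) hss1 hBss.ne'
  have hderL : ∀ x ∈ Ioo 0 (thetaB β),
      HasDerivAt (fun x => Ham α d β x 0) (-F2 α d β x 0) x := fun x hx =>
    h_hasDerivAt hd hβ (mem_Omega_zero hx.1 (hx.2.trans tB1) hx.2.ne)
  have hderR : ∀ x ∈ Ioo (thetaB β) (Real.pi / 2),
      HasDerivAt (fun x => Ham α d β x 0) (-F2 α d β x 0) x := fun x hx =>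
    h_hasDerivAt hd hβ (mem_Omega_zero (tB0.trans hx.1) hx.2 hx.1.ne')
  have hcrit : ∀ x, (x, (0 : ℝ)) ∈ OmegaB β → F2 α d β x 0 = 0 → x = θs ∨ x = θss := by
    intro x hx h2
    rcases honly (x, 0) hx (F1_zero α d β x) h2 with h | h
    · exact Or.inl (Prod.mk.inj h).1
    · exact Or.inr (Prod.mk.inj h).1
  have hcritL : ∀ x ∈ Ioo 0 (thetaB β), x ≠ θs → -F2 α d β x 0 ≠ 0 := by
    intro x hx hne h
    rcases hcrit x (mem_Omega_zero hx.1 (hx.2.trans tB1) hx.2.ne) (neg_eq_zero.1 h) with h | h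
    · exact hne h
    · have := hx.2
      linarith
  have hcritR : ∀ x ∈ Ioo (thetaB β) (Real.pi / 2), x ≠ θss → -F2 α d β x 0 ≠ 0 := by
    intro x hx hne h
    rcases hcrit x (mem_Omega_zero (tB0.trans hx.1) hx.2 hx.1.ne') (neg_eq_zero.1 h) with h | h
    · have := hx.1
      linarith
    · exact hne h
  have hBL : Filter.Tendsto (fun x => Ham α d β x 0) (nhdsWithin (thetaB β) (Iio (thetaB β)))
      Filter.atBot := (h_tendsto_thetaB hα hd hβ).mono_left
        (nhdsWithin_mono _ fun x hx => (show x < thetaB β from hx).ne)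
  have hBR : Filter.Tendsto (fun x => Ham α d β x 0) (nhdsWithin (thetaB β) (Ioi (thetaB β)))
      Filter.atBot := (h_tendsto_thetaB hα hd hβ).mono_left
        (nhdsWithin_mono _ fun x hx => (show thetaB β < x from hx).ne')
  have m1 : StrictMonoOn (fun x => Ham α d β x 0) (Ioc 0 θs) :=
    strictMonoOn_aux (fun x hx => hderL x ⟨hx.1, hx.2.trans_lt hsB⟩)
      (fun x hx => hcritL x ⟨hx.1, hx.2.trans hsB⟩ hx.2.ne) (h_tendsto_zero hα hd hβ)
  have m2 : StrictAntiOn (fun x => Ham α d β x 0) (Ico θs (thetaB β)) :=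
    strictAntiOn_aux (fun x hx => hderL x ⟨hs0.trans_le hx.1, hx.2⟩)
      (fun x hx => hcritL x ⟨hs0.trans hx.1, hx.2⟩ hx.1.ne') hBL
  have m3 : StrictMonoOn (fun x => Ham α d β x 0) (Ioc (thetaB β) θss) :=
    strictMonoOn_aux (fun x hx => hderR x ⟨hx.1, hx.2.trans_lt hss1⟩)
      (fun x hx => hcritR x ⟨hx.1, hx.2.trans hss1⟩ hx.2.ne) hBR
  have m4 : StrictAntiOn (fun x => Ham α d β x 0) (Ico θss (Real.pi / 2)) :=
    strictAntiOn_aux (fun x hx => hderR x ⟨hBss.trans_le hx.1, hx.2⟩)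
      (fun x hx => hcritR x ⟨hBss.trans hx.1, hx.2⟩ hx.1.ne') (h_tendsto_pi hα hd hβ)
  -- strict global maxima on the two sides
  have maxL : ∀ x ∈ Ioo 0 (thetaB β), x ≠ θs → Ham α d β x 0 < Ham α d β θs 0 := by
    intro x hx hne
    rcases lt_or_gt_of_ne hne with h | h
    · exact m1 ⟨hx.1, h.le⟩ ⟨hs0, le_rfl⟩ h
    · exact m2 ⟨le_rfl, hsB⟩ ⟨h.le, hx.2⟩ h
  have maxR : ∀ x ∈ Ioo (thetaB β) (Real.pi / 2), x ≠ θss →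
      Ham α d β x 0 < Ham α d β θss 0 := by
    intro x hx hne
    rcases lt_or_gt_of_ne hne with h | h
    · exact m3 ⟨hx.1, h.le⟩ ⟨hBss, le_rfl⟩ h
    · exact m4 ⟨le_rfl, hss1⟩ ⟨h.le, hx.2⟩ h
  have hE : ∀ t, Ham α d β (θ t) (W t) = Ham α d β θ₀ 0 := by
    intro t
    rw [sol_conserved hd hβ hsol t 0, hi0, hi1]
  have hθc := sol_contθ hsol
  have hWc := sol_contW hsol
  refine ⟨?_, ?_⟩
  · rintro ⟨hθ₀, hmin⟩
    obtain ⟨hEs, hEss⟩ := lt_min_iff.1 hmin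
    have hne1 := sol_ne (θ := θ) (W := W) hα hd hβ hE hsO hEs
    have hne2 := sol_ne (θ := θ) (W := W) hα hd hβ hE hssO hEss
    have hlow : ∀ t, θs < θ t := by
      intro t
      by_contra hc
      push Not at hc
      obtain ⟨u, hu⟩ := mem_range_of_exists_le_of_exists_ge hθc ⟨t, hc⟩
        ⟨0, by rw [hi0]; exact hθ₀.1.le⟩
      exact hne1 u hu
    have hupp : ∀ t, θ t < θss := by
      intro t
      by_contra hc
      push Not at hc
      obtain ⟨u, hu⟩ := mem_range_of_exists_le_of_exists_ge hθc
        ⟨0, by rw [hi0]; exact hθ₀.2.le⟩ ⟨t, hc⟩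
      exact hne2 u hu
    have hgE : ∀ x ∈ Icc θs θss, Ham α d β θ₀ 0 < gfun d β x := by
      intro x hx
      have h1 := (gfun_concave hd hβ).min_le_of_mem_Icc (x := θs) (y := θss) (z := x)
        ⟨hs0, hsB.trans tB1⟩ ⟨tB0.trans hBss, hss1⟩ hx
      have h2 := Ham_lt_gfun hα hd hβ hsO
      have h3 := Ham_lt_gfun hα hd hβ hssO
      exact (lt_min (hEs.trans h2) (hEss.trans h3)).trans_le h1
    have hret := sol_returns hα hd hβ hsol hs0 hss1
      (fun t => ⟨(hlow t).le, (hupp t).le⟩) hE hgE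
      (by
        intro x _ hxO hx2
        rcases hcrit x hxO hx2 with h | h
        · rw [h]
          exact hEs.ne'
        · rw [h]
          exact hEss.ne')
    have hF2 : F2 α d β (θ 0) (W 0) ≠ 0 := by
      rw [hi0, hi1]
      intro h
      rcases hcrit θ₀ h₀ h with h | h
      · exact hθ₀.1.ne' h
      · exact hθ₀.2.ne h
    have hev : ∀ᶠ t in nhdsWithin (0 : ℝ) (Ioi 0), W t ≠ 0 := by
      have := (hsol.2.2 0).eventually_ne (c := 0) hF2
      exact this.filter_mono (nhdsWithin_mono _ fun x hx => (show (0 : ℝ) < x from hx).ne')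
    obtain ⟨ε, hε, hεW⟩ := (mem_nhdsGT_iff_exists_Ioo_subset).1 hev
    have hε' : (0 : ℝ) < ε := hε
    set S : Set ℝ := {t | ε / 2 ≤ t ∧ W t = 0} with hS
    have hScl : IsClosed S :=
      (isClosed_le continuous_const continuous_id).inter (isClosed_eq hWc continuous_const)
    have hSne : S.Nonempty := by
      obtain ⟨t, ht, ht0⟩ := hret (ε / 2)
      exact ⟨t, ht.le, ht0⟩
    have hSbdd : BddBelow S := ⟨ε / 2, fun t ht => ht.1⟩
    obtain ⟨τ, hτS, hτmin⟩ : ∃ τ ∈ S, ∀ t ∈ S, τ ≤ t :=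
      ⟨sInf S, hScl.csInf_mem hSne hSbdd, fun t ht => csInf_le hSbdd ht⟩
    have hτ0 : 0 < τ := by
      have := hτS.1
      linarith
    have hWτ : W τ = 0 := hτS.2
    have hWne : ∀ t ∈ Ioo 0 τ, W t ≠ 0 := by
      intro t ht h0
      rcases lt_or_ge t ε with h | h
      · exact hεW ⟨ht.1, h⟩ h0
      · have := hτmin t ⟨by linarith, h0⟩
        linarith [ht.2]
    have hθne : θ 0 ≠ θ τ := by
      intro h
      obtain ⟨c, hc, hc0⟩ := exists_hasDerivAt_eq_zero hτ0 hθc.continuousOn h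
        (fun t _ => hsol.2.1 t)
      exact hWne c hc (F1_eq_zero hα hd hβ (hsol.1 c) hc0)
    have hax : ∀ t, W t = 0 → θ t ≠ thetaB β := by
      intro t ht h
      apply (hsol.1 t).2.2
      rw [h, ht]
    have hEax : ∀ t, W t = 0 → Ham α d β (θ t) 0 = Ham α d β θ₀ 0 := by
      intro t ht
      have := hE t
      rwa [ht] at this
    -- two times on the axis, one on each side
    obtain ⟨ta, tb, hWa, hWb, hta, htb⟩ : ∃ ta tb, W ta = 0 ∧ W tb = 0 ∧ θ ta < thetaB β ∧
        thetaB β < θ tb := by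
      rcases lt_or_gt_of_ne (hax 0 hi1) with h | h <;>
        rcases lt_or_gt_of_ne (hax τ hWτ) with h' | h'
      · exact absurd (m2.injOn ⟨(hlow 0).le, h⟩ ⟨(hlow τ).le, h'⟩
          ((hEax 0 hi1).trans (hEax τ hWτ).symm)) hθne
      · exact ⟨0, τ, hi1, hWτ, h, h'⟩
      · exact ⟨τ, 0, hWτ, hi1, h', h⟩
      · exact absurd (m3.injOn ⟨h, (hupp 0).le⟩ ⟨h', (hupp τ).le⟩
          ((hEax 0 hi1).trans (hEax τ hWτ).symm)) hθne
    refine ⟨⟨⟨2 * τ, by linarith, fun t => ?_⟩, ⟨0, τ, ?_⟩, ⟨ta, ⟨(hsol.1 ta).1, hta⟩, hWa⟩,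
      ⟨tb, ⟨htb, (hsol.1 tb).2.1⟩, hWb⟩⟩, ?_⟩
    · have r1 := sol_reflect hd hβ hsol hWτ (-t)
      have r2 := sol_reflect hd hβ hsol hi1 t
      rw [show 2 * τ - -t = t + 2 * τ by ring] at r1
      rw [show 2 * (0 : ℝ) - t = -t by ring] at r2
      exact ⟨r1.1.trans r2.1, by rw [r1.2, r2.2, neg_neg]⟩
    · intro h
      exact hθne (Prod.mk.inj h).1
    · apply Set.Subset.antisymm
      · rintro _ ⟨t, rfl⟩
        exact ⟨⟨hsol.1 t, hE t⟩, ⟨(hlow t).le, (hupp t).le⟩, mem_univ _⟩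
      · rintro ⟨x, w⟩ ⟨⟨hxO, hxE⟩, hxI, -⟩
        simp only at hxE hxI
        have hxle : x ≠ thetaB β → Ham α d β x 0 ≤ Ham α d β θ₀ 0 := by
          intro hne
          rw [← hxE]
          exact Ham_zero_le hα hd hβ (mem_Omega_zero hxO.1 hxO.2.1 hne)
        have hxa : θ ta ≤ x := by
          by_contra hc
          push Not at hc
          have h1 := m2 ⟨hxI.1, hc.trans hta⟩ ⟨(hlow ta).le, hta⟩ hc
          have h2 := hxle (hc.trans hta).ne
          have h3 := hEax ta hWa
          simp only at h1
          linarith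
        have hxb : x ≤ θ tb := by
          by_contra hc
          push Not at hc
          have h1 := m3 ⟨htb, (hupp tb).le⟩ ⟨htb.trans hc, hxI.2⟩ hc
          have h2 := hxle (htb.trans hc).ne'
          have h3 := hEax tb hWb
          simp only at h1
          linarith
        obtain ⟨t, ht⟩ := mem_range_of_exists_le_of_exists_ge hθc ⟨ta, hxa⟩ ⟨tb, hxb⟩
        have hsq : W t ^ 2 = w ^ 2 := by
          have h1 := D_eq hα hd hβ (hsol.1 t)
          have h2 := D_eq hα hd hβ hxO
          rw [hE t, ht, Dfun_split] at h1
          rw [hxE, Dfun_split] at h2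
          linarith
        rcases sq_eq_sq_iff_eq_or_eq_neg.1 hsq with h | h
        · exact ⟨t, by simp only [ht, h]⟩
        · have r2 := sol_reflect hd hβ hsol hi1 t
          rw [show 2 * (0 : ℝ) - t = -t by ring] at r2
          exact ⟨-t, by simp only [r2.1, r2.2, ht, h, neg_neg]⟩
  · rintro hnot ⟨-, ⟨p, q, hpq⟩, ⟨t1, ht1, hW1⟩, ⟨t2, ht2, hW2⟩⟩
    apply hnot
    have e1 := hE t1
    have e2 := hE t2
    rw [hW1] at e1
    rw [hW2] at e2
    have nc : ∀ t, W t = 0 → F2 α d β (θ t) 0 ≠ 0 := by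
      intro t ht h
      have h1 : F1 α d β (θ t) (W t) = 0 := by rw [ht, F1_zero]
      have h2 : F2 α d β (θ t) (W t) = 0 := by rw [ht, h]
      exact hpq ((sol_const hd hβ hsol h1 h2 p).trans (sol_const hd hβ hsol h1 h2 q).symm)
    have n1 : θ t1 ≠ θs := by
      intro h
      exact nc t1 hW1 (by rw [h]; exact heqs.2)
    have n2 : θ t2 ≠ θss := by
      intro h
      exact nc t2 hW2 (by rw [h]; exact heqss.2)
    have l1 : Ham α d β θ₀ 0 < Ham α d β θs 0 := e1 ▸ maxL _ ht1 n1
    have l2 : Ham α d β θ₀ 0 < Ham α d β θss 0 := e2 ▸ maxR _ ht2 n2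
    have hne1 := sol_ne (θ := θ) (W := W) hα hd hβ hE hsO l1
    have hne2 := sol_ne (θ := θ) (W := W) hα hd hβ hE hssO l2
    refine ⟨⟨?_, ?_⟩, lt_min l1 l2⟩
    · by_contra hc
      push Not at hc
      obtain ⟨u, hu⟩ := mem_range_of_exists_le_of_exists_ge hθc ⟨0, by rw [hi0]; exact hc⟩
        ⟨t2, (hsB.trans ht2.1).le⟩
      exact hne1 u hu
    · by_contra hc
      push Not at hc
      obtain ⟨u, hu⟩ := mem_range_of_exists_le_of_exists_ge hθc
        ⟨t1, (ht1.2.trans hBss).le⟩ ⟨0, by rw [hi0]; exact hc⟩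
      exact hne2 u hu
end
end
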